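/- arXiv:1006.1561 — 12 statements merged into one kernel-verified Lean document; each statement's English description precedes it below -/
import Mathlib

section
/- Let f : ℝ → ℝ be differentiable on an open interval I containing [0,∞), let 0 ≤ a < b, suppose f' is integrable on [a,b], and suppose |f'| is m-convex on [0,∞) for some fixed m ∈ (0,1]. Then |f((a+b)/2) - (1/(b-a))·∫_a^b f(u) du| ≤ ((b-a)/8)·min{ |f'(a)| + m·|f'(b/m)| , |f'(b)| + m·|f'(a/m)| }. -/
open MeasureTheory Set intervalIntegral

theorem aux_mid (f : ℝ → ℝ) (a b P Q : ℝ) (hab : a < b)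
    (hf : ∀ y ∈ Set.Icc a b, DifferentiableAt ℝ f y)
    (hint : IntervalIntegrable (deriv f) volume a b)
    (hb : ∀ u ∈ Set.Icc a b, |deriv f u| ≤ (P * (b - u) + Q * (u - a)) / (b - a)) :
    |f ((a + b) / 2) - (1 / (b - a)) * ∫ u in a..b, f u| ≤ ((b - a) / 8) * (P + Q) := by
  have hba : 0 < b - a := by linarith
  obtain ⟨c, hc⟩ : ∃ c, c = (a + b) / 2 := ⟨_, rfl⟩
  rw [← hc]
  have hac : a ≤ c := by linarith
  have hcb : c ≤ b := by linarith
  have hi1 : IntervalIntegrable (deriv f) volume a c := hint.mono_set (by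
    rw [uIcc_of_le hac, uIcc_of_le hab.le]; exact Icc_subset_Icc le_rfl hcb)
  have hi2 : IntervalIntegrable (deriv f) volume c b := hint.mono_set (by
    rw [uIcc_of_le hcb, uIcc_of_le hab.le]; exact Icc_subset_Icc hac le_rfl)
  have hcont : ContinuousOn f (Set.Icc a b) := fun y hy => (hf y hy).continuousAt.continuousWithinAt
  have hf1 : IntervalIntegrable f volume a c := ContinuousOn.intervalIntegrable (by
    rw [uIcc_of_le hac]; exact hcont.mono (Icc_subset_Icc le_rfl hcb))
  have hf2 : IntervalIntegrable f volume c b := ContinuousOn.intervalIntegrable (by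
    rw [uIcc_of_le hcb]; exact hcont.mono (Icc_subset_Icc hac le_rfl))
  have e1 : ∫ u in a..c, (u - a) * deriv f u = (c - a) * f c - ∫ u in a..c, f u := by
    have := integral_mul_deriv_eq_deriv_mul (a := a) (b := c) (u := fun u => u - a)
      (v := f) (u' := fun _ => 1) (v' := deriv f)
      (fun x _ => (hasDerivAt_id x).sub_const a)
      (fun x hx => (hf x (by rw [uIcc_of_le hac] at hx; exact ⟨hx.1, hx.2.trans hcb⟩)).hasDerivAt)
      (by simp) hi1
    simpa using this
  have e2 : ∫ u in c..b, (u - b) * deriv f u = (b - c) * f c - ∫ u in c..b, f u := by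
    have := integral_mul_deriv_eq_deriv_mul (a := c) (b := b) (u := fun u => u - b)
      (v := f) (u' := fun _ => 1) (v' := deriv f)
      (fun x _ => (hasDerivAt_id x).sub_const b)
      (fun x hx => (hf x (by rw [uIcc_of_le hcb] at hx; exact ⟨hac.trans hx.1, hx.2⟩)).hasDerivAt)
      (by simp) hi2
    rw [this]; simp; ring
  have esum := integral_add_adjacent_intervals hf1 hf2
  have b1 : |∫ u in a..c, (u - a) * deriv f u| ≤
      ∫ u in a..c, (u - a) * ((P * (b - u) + Q * (u - a)) / (b - a)) := by
    rw [← Real.norm_eq_abs]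
    apply norm_integral_le_of_norm_le hac
    · refine Filter.Eventually.of_forall fun u hu => ?_
      rw [Real.norm_eq_abs, abs_mul, abs_of_nonneg (by linarith [hu.1] : 0 ≤ u - a)]
      exact mul_le_mul_of_nonneg_left (hb u ⟨hu.1.le, hu.2.trans hcb⟩) (by linarith [hu.1])
    · exact Continuous.intervalIntegrable (by fun_prop) _ _
  have b2 : |∫ u in c..b, (u - b) * deriv f u| ≤
      ∫ u in c..b, (b - u) * ((P * (b - u) + Q * (u - a)) / (b - a)) := by
    rw [← Real.norm_eq_abs]
    apply norm_integral_le_of_norm_le hcb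
    · refine Filter.Eventually.of_forall fun u hu => ?_
      rw [Real.norm_eq_abs, abs_mul, abs_of_nonpos (by linarith [hu.2] : u - b ≤ 0), neg_sub]
      exact mul_le_mul_of_nonneg_left (hb u ⟨hac.trans hu.1.le, hu.2⟩) (by linarith [hu.2])
    · exact Continuous.intervalIntegrable (by fun_prop) _ _
  have v1 : ∫ u in a..c, (u - a) * ((P * (b - u) + Q * (u - a)) / (b - a)) =
      (b - a) ^ 2 * (P / 12 + Q / 24) := by
    rw [integral_eq_sub_of_hasDerivAt (f := fun u =>
      (P * ((b - a) * (u - a) ^ 2 / 2 - (u - a) ^ 3 / 3) + Q * ((u - a) ^ 3 / 3)) / (b - a))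
      (fun x _ => ?_) (Continuous.intervalIntegrable (by fun_prop) _ _)]
    · subst hc; field_simp; ring
    · have h := (hasDerivAt_id x).sub_const a
      refine HasDerivAt.congr_deriv ((((((h.pow 2).const_mul (b - a)).div_const 2).sub
        ((h.pow 3).div_const 3)).const_mul P |>.add
          (((h.pow 3).div_const 3).const_mul Q)).div_const (b - a)) ?_
      simp only [id, Nat.cast_ofNat, Nat.add_one_sub_one, Nat.reduceSub, mul_one]; field_simp; ring
  have v2 : ∫ u in c..b, (b - u) * ((P * (b - u) + Q * (u - a)) / (b - a)) =
      (b - a) ^ 2 * (P / 24 + Q / 12) := by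
    rw [integral_eq_sub_of_hasDerivAt (f := fun u =>
      (Q * ((b - a) * (-(u - b) ^ 2) / 2 - (u - b) ^ 3 / 3) + P * ((u - b) ^ 3 / 3)) / (b - a))
      (fun x _ => ?_) (Continuous.intervalIntegrable (by fun_prop) _ _)]
    · subst hc; field_simp; ring
    · have h := (hasDerivAt_id x).sub_const b
      refine HasDerivAt.congr_deriv ((((((h.pow 2).neg.const_mul (b - a)).div_const 2).sub
        ((h.pow 3).div_const 3)).const_mul Q |>.add
          (((h.pow 3).div_const 3).const_mul P)).div_const (b - a)) ?_
      simp only [id, Nat.cast_ofNat, Nat.add_one_sub_one, Nat.reduceSub, mul_one]; field_simp; ring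
  rw [v1] at b1
  rw [v2] at b2
  have key : f c - (1 / (b - a)) * ∫ u in a..b, f u = (1 / (b - a)) *
      ((∫ u in a..c, (u - a) * deriv f u) + ∫ u in c..b, (u - b) * deriv f u) := by
    rw [e1, e2, ← esum]; field_simp; ring
  rw [key, abs_mul, abs_of_pos (by positivity : 0 < 1 / (b - a))]
  calc _ ≤ 1 / (b - a) * ((b - a) ^ 2 * (P / 12 + Q / 24) + (b - a) ^ 2 * (P / 24 + Q / 12)) := by
        apply mul_le_mul_of_nonneg_left _ (by positivity)
        exact (abs_add_le _ _).trans (add_le_add b1 b2)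
    _ = _ := by field_simp; ring

/-- Remark 2.1: midpoint Ostrowski inequality for `|f'|` `m`-convex on `[0,∞)`. -/
theorem stmt_2 (f : ℝ → ℝ) (I : Set ℝ) (hIopen : IsOpen I) (hIconn : I.OrdConnected)
    (hIci : Set.Ici (0:ℝ) ⊆ I) (hf : ∀ y ∈ I, DifferentiableAt ℝ f y)
    (a b : ℝ) (ha : 0 ≤ a) (hab : a < b)
    (hint : IntervalIntegrable (deriv f) volume a b)
    (m : ℝ) (hm0 : 0 < m) (hm1 : m ≤ 1)
    (hmc : ∀ u ∈ Set.Ici (0:ℝ), ∀ v ∈ Set.Ici (0:ℝ), ∀ t ∈ Set.Icc (0:ℝ) 1,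
      |deriv f (t * u + m * (1 - t) * v)| ≤ t * |deriv f u| + m * (1 - t) * |deriv f v|) :
    |f ((a + b) / 2) - (1 / (b - a)) * ∫ u in a..b, f u| ≤
      ((b - a) / 8) * min (|deriv f a| + m * |deriv f (b / m)|)
        (|deriv f b| + m * |deriv f (a / m)|) := by
  have hba : 0 < b - a := by linarith
  have hd : ∀ y ∈ Set.Icc a b, DifferentiableAt ℝ f y := fun y hy => hf y (hIci (ha.trans hy.1))
  rcases min_choice (|deriv f a| + m * |deriv f (b / m)|)
    (|deriv f b| + m * |deriv f (a / m)|) with h | h <;> rw [h]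
  · refine aux_mid f a b _ _ hab hd hint fun u hu => ?_
    have := hmc a ha (b / m) (div_nonneg (ha.trans hab.le) hm0.le) ((b - u) / (b - a))
      ⟨div_nonneg (by linarith [hu.2]) hba.le, by rw [div_le_one hba]; linarith [hu.1]⟩
    have e : (b - u) / (b - a) * a + m * (1 - (b - u) / (b - a)) * (b / m) = u := by
      field_simp; ring
    rw [e] at this
    refine this.trans (le_of_eq ?_)
    field_simp; ring
  · rw [add_comm (|deriv f b|)]
    refine aux_mid f a b _ _ hab hd hint fun u hu => ?_
    have := hmc b (ha.trans hab.le) (a / m) (div_nonneg ha hm0.le) ((u - a) / (b - a))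
      ⟨div_nonneg (by linarith [hu.1]) hba.le, by rw [div_le_one hba]; linarith [hu.2]⟩
    have e : (u - a) / (b - a) * b + m * (1 - (u - a) / (b - a)) * (a / m) = u := by
      field_simp; ring
    rw [e] at this
    refine this.trans (le_of_eq ?_)
    field_simp; ring
end

section
/- Let f : ℝ → ℝ be differentiable on an open interval I containing [0,∞), let 0 ≤ a < b, suppose f' is integrable on [a,b], and suppose |f'| is convex on [a,b]. Then |f((a+b)/2) - (1/(b-a))·∫_a^b f(u) du| ≤ ((b-a)/8)·(|f'(a)| + |f'(b)|). -/
open MeasureTheory Set intervalIntegral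

/-- Remark 2.2 (A): Kirmaci's inequality, `|f'|` convex on `[a,b]`. -/
theorem stmt_3 (f : ℝ → ℝ) (I : Set ℝ) (hIopen : IsOpen I) (hIconn : I.OrdConnected)
    (hIci : Set.Ici (0:ℝ) ⊆ I) (hf : ∀ y ∈ I, DifferentiableAt ℝ f y)
    (a b : ℝ) (ha : 0 ≤ a) (hab : a < b)
    (hint : IntervalIntegrable (deriv f) volume a b)
    (hconv : ConvexOn ℝ (Set.Icc a b) (fun u => |deriv f u|)) :
    |f ((a + b) / 2) - (1 / (b - a)) * ∫ u in a..b, f u| ≤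
      ((b - a) / 8) * (|deriv f a| + |deriv f b|) := by
  have hba : 0 < b - a := sub_pos.2 hab
  obtain ⟨m, hm⟩ : ∃ m, m = (a + b) / 2 := ⟨_, rfl⟩
  rw [← hm]
  have ham : a ≤ m := by linarith
  have hmb : m ≤ b := by linarith
  have hd : ∀ y, a ≤ y → HasDerivAt f (deriv f y) y := fun y hy =>
    (hf y (hIci (ha.trans hy))).hasDerivAt
  have hfc : ContinuousOn f (Icc a b) := fun y hy =>
    (hd y hy.1).continuousAt.continuousWithinAt
  have hi1 : IntervalIntegrable (deriv f) volume a m := hint.mono_set (by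
    rw [uIcc_of_le ham, uIcc_of_le hab.le]; exact Icc_subset_Icc le_rfl hmb)
  have hi2 : IntervalIntegrable (deriv f) volume m b := hint.mono_set (by
    rw [uIcc_of_le hmb, uIcc_of_le hab.le]; exact Icc_subset_Icc ham le_rfl)
  have hf1 : IntervalIntegrable f volume a m := ContinuousOn.intervalIntegrable (by
    rw [uIcc_of_le ham]; exact hfc.mono (Icc_subset_Icc le_rfl hmb))
  have hf2 : IntervalIntegrable f volume m b := ContinuousOn.intervalIntegrable (by
    rw [uIcc_of_le hmb]; exact hfc.mono (Icc_subset_Icc ham le_rfl))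
  have p1 := integral_mul_deriv_eq_deriv_mul (a := a) (b := m) (u := fun x => x - a)
    (u' := fun _ => 1) (v := f) (v' := deriv f)
    (fun x _ => (hasDerivAt_id x).sub_const a)
    (fun x hx => hd x (by rw [uIcc_of_le ham] at hx; exact hx.1)) (by simp) hi1
  have p2 := integral_mul_deriv_eq_deriv_mul (a := m) (b := b) (u := fun x => x - b)
    (u' := fun _ => 1) (v := f) (v' := deriv f)
    (fun x _ => (hasDerivAt_id x).sub_const b)
    (fun x hx => hd x (by rw [uIcc_of_le hmb] at hx; exact ham.trans hx.1)) (by simp) hi2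
  have hadd := integral_add_adjacent_intervals hf1 hf2
  simp only [one_mul, sub_self, zero_mul] at p1 p2
  obtain ⟨A, hA⟩ : ∃ A, A = |deriv f a| := ⟨_, rfl⟩
  obtain ⟨B, hB⟩ : ∃ B, B = |deriv f b| := ⟨_, rfl⟩
  have chord : ∀ u ∈ Icc a b, |deriv f u| ≤ A * ((b - u) / (b - a)) + B * ((u - a) / (b - a)) := by
    intro u hu
    have h := hconv.2 (left_mem_Icc.2 hab.le) (right_mem_Icc.2 hab.le)
      (show 0 ≤ (b - u) / (b - a) from div_nonneg (by linarith [hu.2]) hba.le)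
      (show 0 ≤ (u - a) / (b - a) from div_nonneg (by linarith [hu.1]) hba.le)
      (by field_simp; ring)
    have e : ((b - u) / (b - a)) • a + ((u - a) / (b - a)) • b = u := by
      simp only [smul_eq_mul]; field_simp; ring
    rw [e] at h
    simp only [smul_eq_mul] at h
    rw [hA, hB]; linarith
  have b1 : ‖∫ x in a..m, (x - a) * deriv f x‖ ≤
      ∫ x in a..m, (A * (x - a) + (B - A) / (b - a) * (x - a) ^ 2) := by
    refine norm_integral_le_of_norm_le ham (Filter.Eventually.of_forall fun u hu => ?_)
      (Continuous.intervalIntegrable (by fun_prop) _ _)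
    have h := mul_le_mul_of_nonneg_left (chord u ⟨hu.1.le, hu.2.trans hmb⟩) (sub_nonneg.2 hu.1.le)
    rw [norm_mul, Real.norm_eq_abs, Real.norm_eq_abs, abs_of_nonneg (sub_nonneg.2 hu.1.le)]
    refine h.trans (le_of_eq ?_)
    field_simp; ring
  have b2 : ‖∫ x in m..b, (x - b) * deriv f x‖ ≤
      ∫ x in m..b, (B * (b - x) + (A - B) / (b - a) * (b - x) ^ 2) := by
    refine norm_integral_le_of_norm_le hmb (Filter.Eventually.of_forall fun u hu => ?_)
      (Continuous.intervalIntegrable (by fun_prop) _ _)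
    have h := mul_le_mul_of_nonneg_left (chord u ⟨ham.trans hu.1.le, hu.2⟩) (sub_nonneg.2 hu.2)
    rw [norm_mul, Real.norm_eq_abs, Real.norm_eq_abs, abs_sub_comm, abs_of_nonneg (sub_nonneg.2 hu.2)]
    refine h.trans (le_of_eq ?_)
    field_simp; ring
  have e1 : ∫ x in a..m, (A * (x - a) + (B - A) / (b - a) * (x - a) ^ 2) =
      A * (b - a) ^ 2 / 8 + (B - A) * (b - a) ^ 2 / 24 := by
    rw [integral_eq_sub_of_hasDerivAt
      (f := fun x => A * (x - a) ^ 2 / 2 + (B - A) / (b - a) * (x - a) ^ 3 / 3) ?_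
      (Continuous.intervalIntegrable (by fun_prop) _ _)]
    · subst hm; field_simp; ring
    · intro x _
      have h := (hasDerivAt_id x).sub_const a
      refine HasDerivAt.congr_deriv ((((h.pow 2).const_mul A).div_const 2).add
        (((h.pow 3).const_mul ((B - A) / (b - a))).div_const 3)) ?_
      simp; ring
  have e2 : ∫ x in m..b, (B * (b - x) + (A - B) / (b - a) * (b - x) ^ 2) =
      B * (b - a) ^ 2 / 8 + (A - B) * (b - a) ^ 2 / 24 := by
    rw [integral_eq_sub_of_hasDerivAt
      (f := fun x => -(B * (b - x) ^ 2 / 2 + (A - B) / (b - a) * (b - x) ^ 3 / 3)) ?_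
      (Continuous.intervalIntegrable (by fun_prop) _ _)]
    · subst hm; field_simp; ring
    · intro x _
      have h := (hasDerivAt_id x).const_sub b
      refine HasDerivAt.congr_deriv (((((h.pow 2).const_mul B).div_const 2).add
        (((h.pow 3).const_mul ((A - B) / (b - a))).div_const 3)).neg) ?_
      simp; ring
  have key : f m - 1 / (b - a) * ∫ u in a..b, f u =
      ((∫ x in a..m, (x - a) * deriv f x) + ∫ x in m..b, (x - b) * deriv f x) / (b - a) := by
    rw [p1, p2, ← hadd]; field_simp; ring
  rw [key, abs_div, abs_of_pos hba, div_le_iff₀ hba, ← hA, ← hB]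
  rw [e1] at b1
  rw [e2] at b2
  have := norm_add_le (∫ x in a..m, (x - a) * deriv f x) (∫ x in m..b, (x - b) * deriv f x)
  rw [Real.norm_eq_abs] at this
  nlinarith
end

section
/- Let f : ℝ → ℝ be differentiable on an open interval I containing [0,∞), let 0 ≤ a < b, suppose f' is integrable on [a,b], suppose |f'| is convex on [a,b], and suppose there is M > 0 with |f'(x)| ≤ M for all x ∈ [a,b]. Then |f((a+b)/2) - (1/(b-a))·∫_a^b f(u) du| ≤ M·(b-a)/4. -/
open MeasureTheory Set intervalIntegral

/-- Remark 2.2 (B): midpoint inequality under a bound `|f'| ≤ M` on `[a,b]`. -/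
theorem stmt_4 (f : ℝ → ℝ) (I : Set ℝ) (hIopen : IsOpen I) (hIconn : I.OrdConnected)
    (hIci : Set.Ici (0:ℝ) ⊆ I) (hf : ∀ y ∈ I, DifferentiableAt ℝ f y)
    (a b : ℝ) (ha : 0 ≤ a) (hab : a < b)
    (hint : IntervalIntegrable (deriv f) volume a b)
    (hconv : ConvexOn ℝ (Set.Icc a b) (fun u => |deriv f u|))
    (M : ℝ) (hM : 0 < M) (hbound : ∀ u ∈ Set.Icc a b, |deriv f u| ≤ M) :
    |f ((a + b) / 2) - (1 / (b - a)) * ∫ u in a..b, f u| ≤ M * (b - a) / 4 := by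
  have hL : ∀ x ∈ Set.Icc a b, ∀ y ∈ Set.Icc a b, |f y - f x| ≤ M * |y - x| := by
    intro x hx y hy
    have := (convex_Icc a b).norm_image_sub_le_of_norm_deriv_le (f := f) (C := M)
      (fun z hz => hf z (hIci (le_trans ha hz.1))) (fun z hz => hbound z hz) hx hy
    simpa [Real.norm_eq_abs] using this
  have hcont : ContinuousOn f (Set.Icc a b) := fun z hz =>
    (hf z (hIci (le_trans ha hz.1))).continuousAt.continuousWithinAt
  obtain ⟨c, hc⟩ : ∃ c, c = (a + b) / 2 := ⟨_, rfl⟩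
  rw [← hc]
  have hac : a ≤ c := by linarith
  have hcb : c ≤ b := by linarith
  have hcm : c ∈ Set.Icc a b := ⟨hac, hcb⟩
  have i1 : IntervalIntegrable f volume a c := by
    apply ContinuousOn.intervalIntegrable
    rw [Set.uIcc_of_le hac]
    exact hcont.mono (Set.Icc_subset_Icc le_rfl hcb)
  have i2 : IntervalIntegrable f volume c b := by
    apply ContinuousOn.intervalIntegrable
    rw [Set.uIcc_of_le hcb]
    exact hcont.mono (Set.Icc_subset_Icc hac le_rfl)
  have h1 : |∫ u in a..c, (f c - f u)| ≤ ∫ u in a..c, M * (c - u) := by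
    rw [← Real.norm_eq_abs]
    apply intervalIntegral.norm_integral_le_of_norm_le hac
    · refine Filter.Eventually.of_forall fun u hu => ?_
      have := hL u ⟨hu.1.le, hu.2.trans hcb⟩ c hcm
      rwa [abs_of_nonneg (sub_nonneg.2 hu.2)] at this
    · exact Continuous.intervalIntegrable (by fun_prop) _ _
  have h2 : |∫ u in c..b, (f c - f u)| ≤ ∫ u in c..b, M * (u - c) := by
    rw [← Real.norm_eq_abs]
    apply intervalIntegral.norm_integral_le_of_norm_le hcb
    · refine Filter.Eventually.of_forall fun u hu => ?_
      have := hL u ⟨hac.trans hu.1.le, hu.2⟩ c hcm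
      rwa [abs_sub_comm c u, abs_of_nonneg (sub_nonneg.2 hu.1.le)] at this
    · exact Continuous.intervalIntegrable (by fun_prop) _ _
  have e1 : ∫ u in a..c, M * (c - u) = M * (c - a) ^ 2 / 2 := by
    rw [intervalIntegral.integral_const_mul, intervalIntegral.integral_sub (by simp) (by simp)]
    simp
    ring
  have e2 : ∫ u in c..b, M * (u - c) = M * (b - c) ^ 2 / 2 := by
    rw [intervalIntegral.integral_const_mul, intervalIntegral.integral_sub (by simp) (by simp)]
    simp
    ring
  rw [e1, intervalIntegral.integral_sub (by simp) i1, intervalIntegral.integral_const,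
    smul_eq_mul] at h1
  rw [e2, intervalIntegral.integral_sub (by simp) i2, intervalIntegral.integral_const,
    smul_eq_mul] at h2
  have hsum := intervalIntegral.integral_add_adjacent_intervals i1 i2
  have hpos : 0 < b - a := sub_pos.2 hab
  have key : f c - (1 / (b - a)) * ∫ u in a..b, f u
      = (((c - a) * f c - ∫ u in a..c, f u) + ((b - c) * f c - ∫ u in c..b, f u)) / (b - a) := by
    rw [← hsum]
    field_simp
    ring
  rw [key, abs_div, abs_of_pos hpos, div_le_iff₀ hpos]
  refine (abs_add_le _ _).trans ((add_le_add h1 h2).trans (le_of_eq ?_))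
  rw [hc]
  ring
end

section
/- Let f : ℝ → ℝ be differentiable on an open interval I containing [0,∞), let 0 ≤ a < b, suppose f' is integrable on [a,b], let p > 1 and q = p/(p-1), and suppose |f'|^q is m-convex on [0,∞) for some fixed m ∈ (0,1]. Then for every x ∈ [a,b], |f(x) - (1/(b-a))·∫_a^b f(u) du| ≤ (1/(p+1))^{1/p} · [ ((b-x)²/(b-a)) · ( min{ (|f'(b)|^q + m·|f'(x/m)|^q)/2 , (|f'(x)|^q + m·|f'(b/m)|^q)/2 } )^{1/q} + ((x-a)²/(b-a)) · ( min{ (|f'(a)|^q + m·|f'(x/m)|^q)/2 , (|f'(x)|^q + m·|f'(a/m)|^q)/2 } )^{1/q} ]. -/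
open MeasureTheory Set intervalIntegral

lemma core_aux (f : ℝ → ℝ) (hf : ∀ y : ℝ, 0 ≤ y → DifferentiableAt ℝ f y)
    (p q : ℝ) (hp : 1 < p) (hq : q = p / (p - 1))
    (m : ℝ) (hm0 : 0 < m)
    (hmc : ∀ u ∈ Set.Ici (0:ℝ), ∀ v ∈ Set.Ici (0:ℝ), ∀ t ∈ Set.Icc (0:ℝ) 1,
      |deriv f (t * u + m * (1 - t) * v)| ^ q ≤
        t * |deriv f u| ^ q + m * (1 - t) * |deriv f v| ^ q)
    (x c : ℝ) (hx : 0 ≤ x) (hc : 0 ≤ c) :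
    |(x - c) * f x - ∫ u in c..x, f u| ≤
      (1 / (p + 1)) ^ (1 / p) * ((x - c) ^ 2 *
            (min ((|deriv f c| ^ q + m * |deriv f (x / m)| ^ q) / 2)
              ((|deriv f x| ^ q + m * |deriv f (c / m)| ^ q) / 2)) ^ (1 / q)) := by
  have hpq : p.HolderConjugate q := by
    rw [Real.holderConjugate_iff_eq_conjExponent hp]; exact hq
  have hq1 : 1 < q := hpq.symm.lt
  have hp0 : 0 < p := by linarith
  have hq0 : 0 < q := by linarith
  set h : ℝ → ℝ := fun t => deriv f ((x - c) * t + c) with hh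
  have hmeas : Measurable h := (measurable_deriv f).comp (by fun_prop)
  have hb1 : ∀ t ∈ Set.Icc (0:ℝ) 1, |h t| ^ q ≤ t * |deriv f x| ^ q + m * (1 - t) * |deriv f (c / m)| ^ q := by
    intro t ht
    have := hmc x hx (c / m) (div_nonneg hc hm0.le) t ht
    convert this using 4
    field_simp
    ring
  have hb2 : ∀ t ∈ Set.Icc (0:ℝ) 1, |h t| ^ q ≤ (1 - t) * |deriv f c| ^ q + m * t * |deriv f (x / m)| ^ q := by
    intro t ht
    have := hmc c hc (x / m) (div_nonneg hx hm0.le) (1 - t) ⟨by linarith [ht.2], by linarith [ht.1]⟩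
    rw [sub_sub_cancel] at this
    convert this using 4
    field_simp
    ring
  set A := |deriv f x| ^ q with hA
  set B := |deriv f (c / m)| ^ q with hB
  set C := |deriv f c| ^ q with hC
  set D := |deriv f (x / m)| ^ q with hD
  have hA0 : 0 ≤ A := by positivity
  have hB0 : 0 ≤ B := by positivity
  set M := (A + m * B) ^ (1 / q) with hM
  have hbd : ∀ t ∈ Set.Icc (0:ℝ) 1, |h t| ≤ M := by
    intro t ht
    have h1 : |h t| ^ q ≤ A + m * B := by
      refine (hb1 t ht).trans ?_
      have : 0 ≤ m * B := by positivity
      nlinarith [ht.1, ht.2]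
    rw [hM, one_div]
    exact (Real.le_rpow_inv_iff_of_pos (abs_nonneg _) (by positivity) hq0).2 h1
  set μ := (volume : Measure ℝ).restrict (Set.Ioc (0:ℝ) 1) with hμ
  have hfin : IsFiniteMeasure μ := by rw [hμ]; infer_instance
  have hae : ∀ᵐ t ∂μ, t ∈ Set.Icc (0:ℝ) 1 := by
    filter_upwards [ae_restrict_mem (μ := volume) (measurableSet_Ioc (a := (0:ℝ)) (b := 1))] with t ht
    exact Ioc_subset_Icc_self ht
  have hhb : ∀ r, MemLp h r μ := fun r =>
    MemLp.of_bound hmeas.aestronglyMeasurable M (by filter_upwards [hae] with t ht; exact hbd t ht)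
  have hid : ∀ r, MemLp (fun t : ℝ => t) r μ := fun r =>
    MemLp.of_bound measurable_id.aestronglyMeasurable 1 (by
      filter_upwards [hae] with t ht
      rw [Real.norm_eq_abs, abs_of_nonneg ht.1]; exact ht.2)
  have hhi : Integrable h μ := memLp_one_iff_integrable.1 (hhb 1)
  have hII : IntervalIntegrable h volume 0 1 := (intervalIntegrable_iff_integrableOn_Ioc_of_le zero_le_one).2 hhi
  -- identity
  have hpos : ∀ t ∈ Set.Icc (0:ℝ) 1, 0 ≤ (x - c) * t + c := by
    intro t ht; nlinarith [ht.1, ht.2, mul_nonneg hx ht.1, mul_nonneg hc (sub_nonneg.2 ht.2)]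
  have hder : ∀ t ∈ Set.Icc (0:ℝ) 1, HasDerivAt (fun t => f ((x - c) * t + c)) (h t * (x - c)) t := by
    intro t ht
    have h1 := (hf _ (hpos t ht)).hasDerivAt
    have h2 : HasDerivAt (fun t : ℝ => (x - c) * t + c) (x - c) t := by
      simpa using ((hasDerivAt_id t).const_mul (x - c)).add_const c
    exact h1.comp t h2
  have hparts := intervalIntegral.integral_mul_deriv_eq_deriv_mul (a := (0:ℝ)) (b := 1)
    (u := fun t => t) (u' := fun _ => (1:ℝ)) (v := fun t => f ((x - c) * t + c))
    (v' := fun t => h t * (x - c)) (fun t _ => hasDerivAt_id t)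
    (fun t ht => hder t (by rwa [uIcc_of_le zero_le_one] at ht)) (by simp) (hII.mul_const _)
  have hsub := intervalIntegral.mul_integral_comp_mul_add (a := (0:ℝ)) (b := 1) (f := f) (c := x - c) (d := c)
  simp only [one_mul, zero_mul, mul_one, mul_zero, zero_add, sub_zero, sub_add_cancel] at hparts hsub
  have hident : (x - c) * f x - ∫ u in c..x, f u = (x - c) ^ 2 * ∫ t in (0:ℝ)..1, t * h t := by
    have e : (∫ t in (0:ℝ)..1, t * (h t * (x - c))) = (∫ t in (0:ℝ)..1, t * h t) * (x - c) := by
      rw [← intervalIntegral.integral_mul_const]; congr 1; ext t; ring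
    rw [e] at hparts
    rw [← hsub]
    linear_combination (-(x - c)) * hparts
  -- Hölder
  have hH := integral_mul_norm_le_Lp_mul_Lq hpq (hid (ENNReal.ofReal p)) (hhb (ENNReal.ofReal q))
  have e1 : ∫ t, ‖t‖ ^ p ∂μ = 1 / (p + 1) := by
    have : ∫ t, ‖t‖ ^ p ∂μ = ∫ t in (0:ℝ)..1, t ^ p := by
      rw [intervalIntegral.integral_of_le zero_le_one]
      apply MeasureTheory.integral_congr_ae
      filter_upwards [hae] with t ht
      rw [Real.norm_eq_abs, abs_of_nonneg ht.1]
    rw [this, integral_rpow (Or.inl (by linarith))]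
    rw [Real.one_rpow, Real.zero_rpow (by linarith), sub_zero]
  have hqi : Integrable (fun t => ‖h t‖ ^ q) μ := by
    have := (hhb (ENNReal.ofReal q)).integrable_norm_rpow (by simpa using hq0) (by simp)
    rwa [ENNReal.toReal_ofReal hq0.le] at this
  have key : ∀ P Q : ℝ, (∀ t ∈ Set.Icc (0:ℝ) 1, |h t| ^ q ≤ P + t * Q) →
      ∫ t, ‖h t‖ ^ q ∂μ ≤ P + Q / 2 := by
    intro P Q hPQ
    have hi : IntervalIntegrable (fun t : ℝ => P + t * Q) volume 0 1 :=
      (by fun_prop : Continuous (fun t : ℝ => P + t * Q)).intervalIntegrable _ _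
    have : ∫ t, (P + t * Q) ∂μ = P + Q / 2 := by
      rw [hμ, ← intervalIntegral.integral_of_le zero_le_one,
        intervalIntegral.integral_add (by simp) ((by fun_prop : Continuous (fun t : ℝ => t * Q)).intervalIntegrable _ _),
        intervalIntegral.integral_mul_const, integral_id]
      simp; ring
    rw [← this]
    apply integral_mono_ae hqi ((intervalIntegrable_iff_integrableOn_Ioc_of_le zero_le_one).1 hi)
    filter_upwards [hae] with t ht
    exact hPQ t ht
  have e2 : ∫ t, ‖h t‖ ^ q ∂μ ≤ min ((C + m * D) / 2) ((A + m * B) / 2) := by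
    apply le_min
    · refine (key C (m * D - C) (fun t ht => (hb2 t ht).trans (by linarith))).trans (by linarith)
    · refine (key (m * B) (A - m * B) (fun t ht => (hb1 t ht).trans (by linarith))).trans (by linarith)
  have e3 : |∫ t in (0:ℝ)..1, t * h t| ≤ ∫ t, ‖t‖ * ‖h t‖ ∂μ := by
    rw [intervalIntegral.integral_of_le zero_le_one]
    refine (MeasureTheory.norm_integral_le_integral_norm (μ := μ) (fun t : ℝ => t * h t)).trans (le_of_eq ?_)
    simp only [norm_mul, hμ]
  rw [hident, abs_mul, abs_of_nonneg (sq_nonneg (x - c)), mul_left_comm]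
  refine mul_le_mul_of_nonneg_left (e3.trans (hH.trans ?_)) (sq_nonneg _)
  rw [e1]
  refine mul_le_mul_of_nonneg_left ?_ (by positivity)
  exact Real.rpow_le_rpow (integral_nonneg fun t => by positivity) e2 (by positivity)

/-- Theorem 2.2: Ostrowski-type inequality via Hölder's inequality for `|f'|^q`
`m`-convex on `[0,∞)`, where `q = p/(p-1)`. -/
theorem stmt_5 (f : ℝ → ℝ) (I : Set ℝ) (hIopen : IsOpen I) (hIconn : I.OrdConnected)
    (hIci : Set.Ici (0:ℝ) ⊆ I) (hf : ∀ y ∈ I, DifferentiableAt ℝ f y)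
    (a b : ℝ) (ha : 0 ≤ a) (hab : a < b)
    (hint : IntervalIntegrable (deriv f) volume a b)
    (p q : ℝ) (hp : 1 < p) (hq : q = p / (p - 1))
    (m : ℝ) (hm0 : 0 < m) (hm1 : m ≤ 1)
    (hmc : ∀ u ∈ Set.Ici (0:ℝ), ∀ v ∈ Set.Ici (0:ℝ), ∀ t ∈ Set.Icc (0:ℝ) 1,
      |deriv f (t * u + m * (1 - t) * v)| ^ q ≤
        t * |deriv f u| ^ q + m * (1 - t) * |deriv f v| ^ q)
    (x : ℝ) (hx : x ∈ Set.Icc a b) :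
    |f x - (1 / (b - a)) * ∫ u in a..b, f u| ≤
      (1 / (p + 1)) ^ (1 / p) *
        (((b - x) ^ 2 / (b - a)) *
            (min ((|deriv f b| ^ q + m * |deriv f (x / m)| ^ q) / 2)
              ((|deriv f x| ^ q + m * |deriv f (b / m)| ^ q) / 2)) ^ (1 / q)
          + ((x - a) ^ 2 / (b - a)) *
            (min ((|deriv f a| ^ q + m * |deriv f (x / m)| ^ q) / 2)
              ((|deriv f x| ^ q + m * |deriv f (a / m)| ^ q) / 2)) ^ (1 / q)) := by
  have hf' : ∀ y : ℝ, 0 ≤ y → DifferentiableAt ℝ f y := fun y hy => hf y (hIci hy)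
  have hx0 : 0 ≤ x := ha.trans hx.1
  have h1 := core_aux f hf' p q hp hq m hm0 hmc x a hx0 ha
  have h2 := core_aux f hf' p q hp hq m hm0 hmc x b hx0 (ha.trans hab.le)
  have hi : ∀ s t : ℝ, 0 ≤ s → 0 ≤ t → IntervalIntegrable f volume s t := by
    intro s t hs ht
    apply ContinuousOn.intervalIntegrable
    intro y hy
    exact (hf' y ((le_min hs ht).trans hy.1)).continuousAt.continuousWithinAt
  have hsum := intervalIntegral.integral_add_adjacent_intervals (hi a x ha hx0)
    (hi x b hx0 (ha.trans hab.le))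
  have hba : 0 < b - a := sub_pos.2 hab
  rw [intervalIntegral.integral_symm x b] at h2
  have e : f x - (1 / (b - a)) * ∫ u in a..b, f u =
      (((x - a) * f x - ∫ u in a..x, f u) - ((x - b) * f x - -∫ u in x..b, f u)) / (b - a) := by
    rw [← hsum]; field_simp; ring
  rw [e, abs_div, abs_of_pos hba, div_le_iff₀ hba]
  refine (abs_sub _ _).trans ((add_le_add h1 h2).trans (le_of_eq ?_))
  field_simp
  ring
end

section
/- Let f : ℝ → ℝ be differentiable on an open interval I containing [0,∞), let 0 ≤ a < b, suppose f' is integrable on [a,b], let p > 1 and q = p/(p-1), and suppose |f'|^q is m-convex on [0,∞) for some fixed m ∈ (0,1]. Then |f((a+b)/2) - (1/(b-a))·∫_a^b f(u) du| ≤ ((b-a)/4)·(μ₁^{1/q} + μ₂^{1/q}), where μ₁ = min{ (|f'(b)|^q + m·|f'((a+b)/(2m))|^q)/2 , (|f'((a+b)/2)|^q + m·|f'(b/m)|^q)/2 } and μ₂ = min{ (|f'(a)|^q + m·|f'((a+b)/(2m))|^q)/2 , (|f'((a+b)/2)|^q + m·|f'(a/m)|^q)/2 }. -/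
open MeasureTheory Set intervalIntegral

theorem half_bound (g : ℝ → ℝ) (x y K q : ℝ) (hxy : x ≤ y) (hq : 1 ≤ q) (hg : ∀ u, 0 ≤ g u)
    (hi : IntervalIntegrable g volume x y)
    (h : ∀ u ∈ Set.Icc x y, (g u ^ q + g (x + y - u) ^ q) / 2 ≤ K) :
    ∫ u in x..y, g u ≤ (y - x) * K ^ (1 / q) := by
  have hi2 : IntervalIntegrable (fun u => g (x + y - u)) volume x y := by
    have := (hi.comp_sub_left (x + y)).symm
    simpa using this
  have e : ∫ u in x..y, g (x + y - u) = ∫ u in x..y, g u := by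
    rw [intervalIntegral.integral_comp_sub_left (fun u => g u) (x + y)]
    simp
  have e2 : ∫ u in x..y, (g u + g (x + y - u)) = 2 * ∫ u in x..y, g u := by
    rw [intervalIntegral.integral_add hi hi2, e]; ring
  have e3 : ∫ u in x..y, (g u + g (x + y - u)) ≤ ∫ u in x..y, 2 * K ^ (1 / q) := by
    apply intervalIntegral.integral_mono_on hxy (hi.add hi2) (by simp)
    intro u hu
    have h1 := (convexOn_rpow hq).2 (Set.mem_Ici.2 (hg u)) (Set.mem_Ici.2 (hg (x + y - u)))
      (by norm_num : (0:ℝ) ≤ 1 / 2) (by norm_num : (0:ℝ) ≤ 1 / 2) (by norm_num)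
    simp only [smul_eq_mul] at h1
    have h2 := h u hu
    have h0 : 0 ≤ 1 / 2 * g u + 1 / 2 * g (x + y - u) := by
      have := hg u
      have := hg (x + y - u)
      linarith
    have h3 : (1 / 2 * g u + 1 / 2 * g (x + y - u)) ^ q ≤ K := by linarith
    have h4 := Real.rpow_le_rpow (Real.rpow_nonneg h0 q) h3 (z := 1 / q) (by positivity)
    rw [← Real.rpow_mul h0, mul_one_div_cancel (by linarith), Real.rpow_one] at h4
    linarith
  rw [intervalIntegral.integral_const, smul_eq_mul] at e3
  linarith

theorem pair_bound (g : ℝ → ℝ) (q m : ℝ) (hm0 : 0 < m)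
    (hmc : ∀ u ∈ Set.Ici (0:ℝ), ∀ v ∈ Set.Ici (0:ℝ), ∀ t ∈ Set.Icc (0:ℝ) 1,
      g (t * u + m * (1 - t) * v) ^ q ≤ t * g u ^ q + m * (1 - t) * g v ^ q)
    (r s t : ℝ) (hr : 0 ≤ r) (hs : 0 ≤ s) (ht : t ∈ Set.Icc (0:ℝ) 1) (u v : ℝ)
    (hu : u = t * r + (1 - t) * s) (hv : v = (1 - t) * r + t * s) :
    (g u ^ q + g v ^ q) / 2 ≤ (g r ^ q + m * g (s / m) ^ q) / 2 := by
  have h1 := hmc r hr (s / m) (div_nonneg hs hm0.le) t ht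
  have h2 := hmc r hr (s / m) (div_nonneg hs hm0.le) (1 - t)
    ⟨by linarith [ht.2], by linarith [ht.1]⟩
  have e1 : t * r + m * (1 - t) * (s / m) = u := by rw [hu]; field_simp
  have e2 : (1 - t) * r + m * (1 - (1 - t)) * (s / m) = v := by rw [hv]; field_simp; ring
  rw [e1] at h1
  rw [e2] at h2
  linarith

theorem osc_bound (f : ℝ → ℝ) (x y c : ℝ) (hxy : x ≤ y) (hc : c ∈ Set.Icc x y)
    (hf : ∀ z ∈ Set.Icc x y, DifferentiableAt ℝ f z)
    (hi : IntervalIntegrable (deriv f) volume x y) :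
    |(y - x) * f c - ∫ u in x..y, f u| ≤ (y - x) * ∫ u in x..y, |deriv f u| := by
  have hfc : ContinuousOn f (Set.uIcc x y) := by
    rw [Set.uIcc_of_le hxy]
    exact fun z hz => (hf z hz).continuousAt.continuousWithinAt
  have e : (y - x) * f c - ∫ u in x..y, f u = ∫ u in x..y, (f c - f u) := by
    rw [intervalIntegral.integral_sub (by simp) hfc.intervalIntegrable]
    simp
  rw [e, ← Real.norm_eq_abs]
  have := intervalIntegral.norm_integral_le_of_norm_le_const (a := x) (b := y)
    (f := fun u => f c - f u) (C := ∫ u in x..y, |deriv f u|) ?_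
  · rw [abs_of_nonneg (by linarith)] at this
    linarith
  intro u hu
  rw [Set.uIoc_of_le hxy] at hu
  have hu' : u ∈ Set.Icc x y := ⟨hu.1.le, hu.2⟩
  have hsub : Set.uIcc u c ⊆ Set.Icc x y := Set.uIcc_subset_Icc hu' hc
  have hsub' : Set.uIcc u c ⊆ Set.uIcc x y := by rwa [Set.uIcc_of_le hxy]
  have ft := intervalIntegral.integral_deriv_eq_sub (f := f) (a := u) (b := c)
    (fun z hz => hf z (hsub hz)) (hi.mono_set hsub')
  rw [← ft]
  refine intervalIntegral.norm_integral_le_integral_norm_uIoc.trans ?_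
  rw [intervalIntegral.integral_of_le hxy]
  apply MeasureTheory.setIntegral_mono_set
  · exact ((intervalIntegrable_iff_integrableOn_Ioc_of_le hxy).1 hi).norm
  · exact Filter.Eventually.of_forall fun z => abs_nonneg _
  · apply HasSubset.Subset.eventuallyLE
    rw [← Set.uIoc_of_le hxy]
    exact Set.uIoc_subset_uIoc_of_uIcc_subset_uIcc hsub'

/-- Corollary 2.2: midpoint inequality for `|f'|^q` `m`-convex on `[0,∞)`, `q = p/(p-1)`. -/
theorem stmt_7 (f : ℝ → ℝ) (I : Set ℝ) (hIopen : IsOpen I) (hIconn : I.OrdConnected)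
    (hIci : Set.Ici (0:ℝ) ⊆ I) (hf : ∀ y ∈ I, DifferentiableAt ℝ f y)
    (a b : ℝ) (ha : 0 ≤ a) (hab : a < b)
    (hint : IntervalIntegrable (deriv f) volume a b)
    (p q : ℝ) (hp : 1 < p) (hq : q = p / (p - 1))
    (m : ℝ) (hm0 : 0 < m) (hm1 : m ≤ 1)
    (hmc : ∀ u ∈ Set.Ici (0:ℝ), ∀ v ∈ Set.Ici (0:ℝ), ∀ t ∈ Set.Icc (0:ℝ) 1,
      |deriv f (t * u + m * (1 - t) * v)| ^ q ≤
        t * |deriv f u| ^ q + m * (1 - t) * |deriv f v| ^ q) :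
    |f ((a + b) / 2) - (1 / (b - a)) * ∫ u in a..b, f u| ≤
      ((b - a) / 4) *
        ((min ((|deriv f b| ^ q + m * |deriv f ((a + b) / (2 * m))| ^ q) / 2)
            ((|deriv f ((a + b) / 2)| ^ q + m * |deriv f (b / m)| ^ q) / 2)) ^ (1 / q)
          + (min ((|deriv f a| ^ q + m * |deriv f ((a + b) / (2 * m))| ^ q) / 2)
            ((|deriv f ((a + b) / 2)| ^ q + m * |deriv f (a / m)| ^ q) / 2)) ^ (1 / q)) := by
  have hq1 : 1 ≤ q := by rw [hq, le_div_iff₀ (by linarith)]; linarith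
  have hcm : (a + b) / (2 * m) = (a + b) / 2 / m := by field_simp
  rw [hcm]
  obtain ⟨c, hc⟩ : ∃ c, c = (a + b) / 2 := ⟨_, rfl⟩
  rw [← hc]
  have hac : a < c := by linarith
  have hcb : c < b := by linarith
  have hd : ∀ z, 0 ≤ z → DifferentiableAt ℝ f z := fun z hz => hf z (hIci hz)
  have hi1 : IntervalIntegrable (deriv f) volume a c := hint.mono_set (by
    rw [Set.uIcc_of_le hac.le, Set.uIcc_of_le hab.le]; exact Set.Icc_subset_Icc_right hcb.le)
  have hi2 : IntervalIntegrable (deriv f) volume c b := hint.mono_set (by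
    rw [Set.uIcc_of_le hcb.le, Set.uIcc_of_le hab.le]; exact Set.Icc_subset_Icc_left hac.le)
  have pb := pair_bound (fun u => |deriv f u|) q m hm0 hmc
  have hfi : ∀ x y, 0 ≤ x → x ≤ y → IntervalIntegrable f volume x y := by
    intro x y hx hxy
    apply ContinuousOn.intervalIntegrable
    rw [Set.uIcc_of_le hxy]
    exact fun z hz => (hd z (hx.trans hz.1)).continuousAt.continuousWithinAt
  have key : ∀ x y, 0 ≤ x → x < y → ∀ u ∈ Set.Icc x y,
      (|deriv f u| ^ q + |deriv f (x + y - u)| ^ q) / 2 ≤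
        (|deriv f y| ^ q + m * |deriv f (x / m)| ^ q) / 2 ∧
      (|deriv f u| ^ q + |deriv f (x + y - u)| ^ q) / 2 ≤
        (|deriv f x| ^ q + m * |deriv f (y / m)| ^ q) / 2 := by
    intro x y hx hxy u hu
    have hyx : 0 < y - x := by linarith
    have hne : y - x ≠ 0 := hyx.ne'
    constructor
    · refine pb y x ((u - x) / (y - x)) (by linarith) hx
        ⟨div_nonneg (by linarith [hu.1]) hyx.le, ?_⟩ u (x + y - u) ?_ ?_
      · rw [div_le_one hyx]; linarith [hu.2]
      · field_simp; ring
      · field_simp; ring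
    · refine pb x y ((y - u) / (y - x)) hx (by linarith)
        ⟨div_nonneg (by linarith [hu.2]) hyx.le, ?_⟩ u (x + y - u) ?_ ?_
      · rw [div_le_one hyx]; linarith [hu.1]
      · field_simp; ring
      · field_simp; ring
  have o1 := osc_bound f a c c hac.le ⟨hac.le, le_rfl⟩ (fun z hz => hd z (ha.trans hz.1)) hi1
  have o2 := osc_bound f c b c hcb.le ⟨le_rfl, hcb.le⟩
    (fun z hz => hd z (by linarith [hz.1])) hi2
  have b2 := half_bound (fun u => |deriv f u|) c b
    (min ((|deriv f b| ^ q + m * |deriv f (c / m)| ^ q) / 2)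
      ((|deriv f c| ^ q + m * |deriv f (b / m)| ^ q) / 2)) q hcb.le hq1
    (fun u => abs_nonneg _) hi2.abs
    (fun u hu => le_min (key c b (by linarith) hcb u hu).1 (key c b (by linarith) hcb u hu).2)
  have b1 := half_bound (fun u => |deriv f u|) a c
    (min ((|deriv f a| ^ q + m * |deriv f (c / m)| ^ q) / 2)
      ((|deriv f c| ^ q + m * |deriv f (a / m)| ^ q) / 2)) q hac.le hq1
    (fun u => abs_nonneg _) hi1.abs
    (fun u hu => le_min (key a c ha hac u hu).2 (key a c ha hac u hu).1)
  generalize (min ((|deriv f b| ^ q + m * |deriv f (c / m)| ^ q) / 2)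
      ((|deriv f c| ^ q + m * |deriv f (b / m)| ^ q) / 2)) ^ (1 / q) = M1 at *
  generalize (min ((|deriv f a| ^ q + m * |deriv f (c / m)| ^ q) / 2)
      ((|deriv f c| ^ q + m * |deriv f (a / m)| ^ q) / 2)) ^ (1 / q) = M2 at *
  have hs := intervalIntegral.integral_add_adjacent_intervals (hfi a c ha hac.le)
    (hfi c b (by linarith) hcb.le)
  have hba : 0 < b - a := by linarith
  have e : f c - 1 / (b - a) * ∫ u in a..b, f u =
      (((c - a) * f c - ∫ u in a..c, f u) + ((b - c) * f c - ∫ u in c..b, f u)) / (b - a) := by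
    rw [← hs]; field_simp; ring
  rw [e, abs_div, abs_of_pos hba, div_le_iff₀ hba]
  refine (abs_add_le _ _).trans ((add_le_add o1 o2).trans ?_)
  have k1 := mul_le_mul_of_nonneg_left b1 (sub_nonneg.2 hac.le)
  have k2 := mul_le_mul_of_nonneg_left b2 (sub_nonneg.2 hcb.le)
  refine (add_le_add k1 k2).trans (le_of_eq ?_)
  rw [hc]; ring
end

section
/- Let f : ℝ → ℝ be differentiable on an open interval I containing [0,∞), let 0 ≤ a < b, suppose f' is integrable on [a,b], let p > 1 and q = p/(p-1), suppose |f'|^q is convex on [a,b], and suppose |f'| is monotone increasing on [a,b]. Then |f((a+b)/2) - (1/(b-a))·∫_a^b f(u) du| ≤ ((b-a)/2)·|f'(b)|. -/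
open MeasureTheory Set intervalIntegral

/-- Remark 2.4 (D): `|f'|^q` convex on `[a,b]` and `|f'|` increasing. -/
theorem stmt_8 (f : ℝ → ℝ) (I : Set ℝ) (hIopen : IsOpen I) (hIconn : I.OrdConnected)
    (hIci : Set.Ici (0:ℝ) ⊆ I) (hf : ∀ y ∈ I, DifferentiableAt ℝ f y)
    (a b : ℝ) (ha : 0 ≤ a) (hab : a < b)
    (hint : IntervalIntegrable (deriv f) volume a b)
    (p q : ℝ) (hp : 1 < p) (hq : q = p / (p - 1))
    (hconv : ConvexOn ℝ (Set.Icc a b) (fun u => |deriv f u| ^ q))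
    (hmono : MonotoneOn (fun u => |deriv f u|) (Set.Icc a b)) :
    |f ((a + b) / 2) - (1 / (b - a)) * ∫ u in a..b, f u| ≤
      ((b - a) / 2) * |deriv f b| := by
  have hd : ∀ x ∈ Set.Icc a b, DifferentiableAt ℝ f x :=
    fun x hx => hf x (hIci (le_trans ha hx.1))
  have hb : ∀ x ∈ Set.Icc a b, ‖deriv f x‖ ≤ |deriv f b| :=
    fun x hx => hmono hx (Set.right_mem_Icc.2 hab.le) hx.2
  have hc : (a + b) / 2 ∈ Set.Icc a b := ⟨by linarith, by linarith⟩
  have hfi : IntervalIntegrable f volume a b := by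
    apply ContinuousOn.intervalIntegrable
    rw [Set.uIcc_of_le hab.le]
    exact fun x hx => (hd x hx).continuousAt.continuousWithinAt
  have hpt : ∀ x ∈ Set.uIoc a b, ‖f ((a + b) / 2) - f x‖ ≤ ((b - a) / 2) * |deriv f b| := by
    intro x hx
    rw [Set.uIoc_of_le hab.le] at hx
    have h := (convex_Icc a b).norm_image_sub_le_of_norm_deriv_le hd hb
      (Set.Ioc_subset_Icc_self hx) hc
    have h2 : ‖(a + b) / 2 - x‖ ≤ (b - a) / 2 := by
      rw [Real.norm_eq_abs, abs_le]
      constructor <;> linarith [hx.1, hx.2]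
    calc _ ≤ _ := h
      _ ≤ |deriv f b| * ((b - a) / 2) := by gcongr
      _ = _ := mul_comm _ _
  have hI := intervalIntegral.norm_integral_le_of_norm_le_const hpt
  rw [intervalIntegral.integral_sub intervalIntegrable_const hfi,
    intervalIntegral.integral_const, smul_eq_mul, Real.norm_eq_abs] at hI
  have hpos : 0 < b - a := by linarith
  have he : f ((a + b) / 2) - (1 / (b - a)) * ∫ u in a..b, f u
      = ((b - a) * f ((a + b) / 2) - ∫ u in a..b, f u) / (b - a) := by
    field_simp
  rw [he, abs_div, abs_of_pos hpos, div_le_iff₀ hpos]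
  rwa [abs_of_pos hpos] at hI
end

section
/- Let f : ℝ → ℝ be differentiable on an open interval I containing [0,∞), let 0 ≤ a < b, suppose f' is integrable on [a,b], let p > 1 and q = p/(p-1), suppose |f'|^q is convex on [a,b], and suppose |f'| is monotone decreasing on [a,b]. Then |f((a+b)/2) - (1/(b-a))·∫_a^b f(u) du| ≤ ((b-a)/2)·|f'(a)|. -/
open MeasureTheory Set intervalIntegral

/-- Remark 2.4 (E): `|f'|^q` convex on `[a,b]` and `|f'|` decreasing. -/
theorem stmt_9 (f : ℝ → ℝ) (I : Set ℝ) (hIopen : IsOpen I) (hIconn : I.OrdConnected)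
    (hIci : Set.Ici (0:ℝ) ⊆ I) (hf : ∀ y ∈ I, DifferentiableAt ℝ f y)
    (a b : ℝ) (ha : 0 ≤ a) (hab : a < b)
    (hint : IntervalIntegrable (deriv f) volume a b)
    (p q : ℝ) (hp : 1 < p) (hq : q = p / (p - 1))
    (hconv : ConvexOn ℝ (Set.Icc a b) (fun u => |deriv f u| ^ q))
    (hmono : AntitoneOn (fun u => |deriv f u|) (Set.Icc a b)) :
    |f ((a + b) / 2) - (1 / (b - a)) * ∫ u in a..b, f u| ≤
      ((b - a) / 2) * |deriv f a| := by
  have hI : ∀ y ∈ Set.Icc a b, DifferentiableAt ℝ f y :=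
    fun y hy => hf y (hIci (le_trans ha hy.1))
  have hm : (a + b) / 2 ∈ Set.Icc a b := ⟨by linarith, by linarith⟩
  have hbd : ∀ y ∈ Set.Icc a b, ‖deriv f y‖ ≤ |deriv f a| := fun y hy =>
    hmono (Set.left_mem_Icc.2 hab.le) hy hy.1
  have hlip : ∀ u ∈ Set.Icc a b, ‖f ((a + b) / 2) - f u‖ ≤ |deriv f a| * ((b - a) / 2) := by
    intro u hu
    refine ((convex_Icc a b).norm_image_sub_le_of_norm_deriv_le hI hbd hu hm).trans ?_
    refine mul_le_mul_of_nonneg_left ?_ (abs_nonneg _)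
    rw [Real.norm_eq_abs, abs_le]
    constructor <;> linarith [hu.1, hu.2]
  have hfi : IntervalIntegrable f volume a b := by
    apply ContinuousOn.intervalIntegrable
    rw [Set.uIcc_of_le hab.le]
    exact fun y hy => (hI y hy).continuousAt.continuousWithinAt
  have hpos : 0 < b - a := sub_pos.2 hab
  have key := intervalIntegral.norm_integral_le_of_norm_le_const (a := a) (b := b)
    (f := fun u => f ((a + b) / 2) - f u) (C := |deriv f a| * ((b - a) / 2)) (by
      intro u hu
      rw [Set.uIoc_of_le hab.le] at hu
      exact hlip u ⟨hu.1.le, hu.2⟩)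
  rw [intervalIntegral.integral_sub intervalIntegrable_const hfi,
    intervalIntegral.integral_const, smul_eq_mul, Real.norm_eq_abs, abs_of_pos hpos] at key
  have e : f ((a + b) / 2) - (1 / (b - a)) * ∫ u in a..b, f u
      = ((b - a) * f ((a + b) / 2) - ∫ u in a..b, f u) / (b - a) := by
    field_simp
  rw [e, abs_div, abs_of_pos hpos, div_le_iff₀ hpos]
  linarith
end

section
/- Let f : ℝ → ℝ be differentiable on an open interval I containing [0,∞), let 0 ≤ a < b, suppose f' is integrable on [a,b], let p > 1 and q = p/(p-1), suppose |f'|^q is convex on [a,b], and suppose |f'(a)| = |f'(b)| = |f'((a+b)/2)|. Then |f((a+b)/2) - (1/(b-a))·∫_a^b f(u) du| ≤ ((b-a)/2)·|f'((a+b)/2)|. -/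
open MeasureTheory Set intervalIntegral

/-- Remark 2.4 (F): `|f'|^q` convex on `[a,b]` and `|f'(a)| = |f'(b)| = |f'((a+b)/2)|`. -/
theorem stmt_10 (f : ℝ → ℝ) (I : Set ℝ) (hIopen : IsOpen I) (hIconn : I.OrdConnected)
    (hIci : Set.Ici (0:ℝ) ⊆ I) (hf : ∀ y ∈ I, DifferentiableAt ℝ f y)
    (a b : ℝ) (ha : 0 ≤ a) (hab : a < b)
    (hint : IntervalIntegrable (deriv f) volume a b)
    (p q : ℝ) (hp : 1 < p) (hq : q = p / (p - 1))
    (hconv : ConvexOn ℝ (Set.Icc a b) (fun u => |deriv f u| ^ q))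
    (heq1 : |deriv f a| = |deriv f b|)
    (heq2 : |deriv f b| = |deriv f ((a + b) / 2)|) :
    |f ((a + b) / 2) - (1 / (b - a)) * ∫ u in a..b, f u| ≤
      ((b - a) / 2) * |deriv f ((a + b) / 2)| := by
  have hq0 : 0 < q := by
    rw [hq]; exact div_pos (by linarith) (by linarith)
  set c := (a + b) / 2 with hc
  set M := |deriv f c| with hM
  have hcm : c ∈ Icc a b := ⟨by linarith, by linarith⟩
  have hbd : ∀ x ∈ Icc a b, |deriv f x| ≤ M := by
    intro x hx
    have h := hconv.le_max_of_mem_Icc (left_mem_Icc.2 hab.le) (right_mem_Icc.2 hab.le) hx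
    simp only [heq1, heq2, max_self] at h
    exact (Real.rpow_le_rpow_iff (abs_nonneg _) (abs_nonneg _) hq0).1 h
  have hdiff : ∀ x ∈ Icc a b, DifferentiableAt ℝ f x := fun x hx =>
    hf x (hIci (le_trans ha hx.1))
  have hlip : ∀ x ∈ Icc a b, |f c - f x| ≤ M * ((b - a) / 2) := by
    intro x hx
    have h := (convex_Icc a b).norm_image_sub_le_of_norm_deriv_le (f := f) (C := M)
      hdiff (fun y hy => by simpa using hbd y hy) hx hcm
    simp only [Real.norm_eq_abs] at h
    refine h.trans (mul_le_mul_of_nonneg_left ?_ (abs_nonneg _))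
    rw [abs_le]
    constructor <;> linarith [hx.1, hx.2]
  have hfi : IntervalIntegrable f volume a b := by
    apply ContinuousOn.intervalIntegrable
    rw [uIcc_of_le hab.le]
    exact fun x hx => (hdiff x hx).continuousAt.continuousWithinAt
  have hI : |∫ u in a..b, (f c - f u)| ≤ M * ((b - a) / 2) * |b - a| := by
    have := intervalIntegral.norm_integral_le_of_norm_le_const (a := a) (b := b)
      (f := fun u => f c - f u) (C := M * ((b - a) / 2)) (fun x hx => by
        rw [uIoc_of_le hab.le] at hx
        exact hlip x (Ioc_subset_Icc_self hx))
    simpa using this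
  have hpos : 0 < b - a := by linarith
  rw [intervalIntegral.integral_sub (by simp) hfi, intervalIntegral.integral_const,
    smul_eq_mul, abs_of_pos hpos] at hI
  have he : f c - (1 / (b - a)) * ∫ u in a..b, f u
      = ((b - a) * f c - ∫ u in a..b, f u) / (b - a) := by
    field_simp
  rw [he, abs_div, abs_of_pos hpos, div_le_iff₀ hpos]
  linarith
end

section
/- Let f : ℝ → ℝ be differentiable on an open interval I containing [0,∞), let 0 ≤ a < b, suppose f' is integrable on [a,b], let q ∈ [1,∞), and suppose |f'|^q is m-convex on [0,∞) for some fixed m ∈ (0,1]. Then for every x ∈ [a,b], |f(x) - (1/(b-a))·∫_a^b f(u) du| ≤ (b-a)·(1/2)^{1-1/q} · { ((b-x)/(b-a))^{2(1-1/q)} · [ (1/3)·((b-x)/(b-a))³·|f'(a)|^q + m·((b-x)²·(b-3a+2x))/(6·(b-a)³)·|f'(b/m)|^q ]^{1/q} + ((x-a)/(b-a))^{2(1-1/q)} · [ ( 1/6 + ((b-x)²·(3a-b-2x))/(6·(b-a)³) )·|f'(a)|^q + m·(1/3)·((x-a)/(b-a))³·|f'(b/m)|^q ]^{1/q} }. 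-/
open MeasureTheory Set intervalIntegral

lemma aux_pm (s r : ℝ) (hsr : s ≤ r) (w B g : ℝ → ℝ) (hw : Continuous w) (hB : Continuous B)
    (hg : IntervalIntegrable g volume s r) (q : ℝ) (hq : 1 ≤ q)
    (hw0 : ∀ u ∈ Icc s r, 0 ≤ w u) (hgB : ∀ u ∈ Icc s r, |g u| ^ q ≤ B u)
    (W J : ℝ) (hW : ∫ u in s..r, w u = W) (hJ : ∫ u in s..r, w u * B u = J)
    (hWpos : s < r → 0 < W) :
    |∫ u in s..r, w u * g u| ≤ W ^ (1 - 1 / q) * J ^ (1 / q) := by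
  have hq0 : 0 < q := by linarith
  have hp0 : 0 < 1 / q := by positivity
  have hp1 : 1 / q ≤ 1 := by rw [div_le_one hq0]; exact hq
  rcases hsr.eq_or_lt with h | h
  · subst h
    simp at hW hJ
    subst hW hJ
    simp only [integral_same, abs_zero]
    positivity
  have hW0 := hWpos h
  have hB0 : ∀ u ∈ Icc s r, 0 ≤ B u := fun u hu => le_trans (by positivity) (hgB u hu)
  have hJ0 : 0 ≤ J := by
    rw [← hJ]
    exact integral_nonneg hsr fun u hu => mul_nonneg (hw0 u hu) (hB0 u hu)
  have key : ∀ l : ℝ, J / W < l → |∫ u in s..r, w u * g u| ≤ W * l ^ (1 / q) := by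
    intro l hl
    have hl0 : 0 < l := lt_of_le_of_lt (by positivity) hl
    have hpt : ∀ u ∈ Icc s r, |w u * g u| ≤
        (l ^ (1/q) * (1 - 1/q)) * w u + (l ^ (1/q) * (1/q) / l) * (w u * B u) := by
      intro u hu
      have h1 : |g u| ≤ B u ^ (1/q) := by
        have := Real.rpow_le_rpow (by positivity) (hgB u hu) hp0.le
        rwa [← Real.rpow_mul (abs_nonneg _), mul_one_div_cancel hq0.ne', Real.rpow_one] at this
      have hBl : 0 ≤ B u / l := div_nonneg (hB0 u hu) hl0.le
      have h2 := rpow_one_add_le_one_add_mul_self (s := B u / l - 1) (by linarith) hp0.le hp1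
      have h3 : B u ^ (1/q) = l ^ (1/q) * (1 + (B u / l - 1)) ^ (1/q) := by
        rw [← Real.mul_rpow hl0.le (by linarith)]
        congr 1
        field_simp
        ring
      have h4 : |g u| ≤ l ^ (1/q) * (1 + 1/q * (B u / l - 1)) := by
        rw [h3] at h1
        exact h1.trans (mul_le_mul_of_nonneg_left h2 (by positivity))
      rw [abs_mul, abs_of_nonneg (hw0 u hu)]
      refine (mul_le_mul_of_nonneg_left h4 (hw0 u hu)).trans (le_of_eq ?_)
      ring
    have hi1 : IntervalIntegrable w volume s r := hw.intervalIntegrable _ _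
    have hi2 : IntervalIntegrable (fun u => w u * B u) volume s r :=
      (hw.mul hB).intervalIntegrable _ _
    have hi : IntervalIntegrable (fun u => w u * g u) volume s r :=
      hg.continuousOn_mul hw.continuousOn
    calc |∫ u in s..r, w u * g u| ≤ ∫ u in s..r, |w u * g u| :=
          abs_integral_le_integral_abs hsr
      _ ≤ ∫ u in s..r, ((l ^ (1/q) * (1 - 1/q)) * w u + (l ^ (1/q) * (1/q) / l) * (w u * B u)) :=
          integral_mono_on hsr hi.abs ((hi1.const_mul _).add (hi2.const_mul _)) hpt
      _ = (l ^ (1/q) * (1 - 1/q)) * W + (l ^ (1/q) * (1/q) / l) * J := by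
          rw [integral_add (hi1.const_mul _) (hi2.const_mul _), intervalIntegral.integral_const_mul,
            intervalIntegral.integral_const_mul, hW, hJ]
      _ ≤ (l ^ (1/q) * (1 - 1/q)) * W + (l ^ (1/q) * (1/q) / l) * (l * W) := by
          have : J ≤ l * W := ((div_lt_iff₀ hW0).1 hl).le
          gcongr
      _ = W * l ^ (1/q) := by field_simp; ring
  have hlim : |∫ u in s..r, w u * g u| ≤ W * (J / W) ^ (1 / q) := by
    have hc : Continuous fun l : ℝ => W * l ^ (1 / q) :=
      continuous_const.mul (Real.continuous_rpow_const hp0.le)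
    have ht : Filter.Tendsto (fun l : ℝ => W * l ^ (1 / q)) (nhdsWithin (J / W) (Ioi (J / W)))
        (nhds (W * (J / W) ^ (1 / q))) := hc.continuousWithinAt
    exact ge_of_tendsto ht (Filter.eventually_of_mem self_mem_nhdsWithin key)
  refine hlim.trans (le_of_eq ?_)
  rw [Real.div_rpow hJ0 hW0.le, Real.rpow_sub hW0, Real.rpow_one]
  ring

lemma aux_scale (D c j p : ℝ) (hD : 0 < D) (hc : 0 ≤ c) (hj : 0 ≤ j) :
    (D ^ 2 * (c ^ 2 / 2)) ^ (1 - p) * (D ^ 2 * j) ^ p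
      = D ^ 2 * ((1 / 2 : ℝ) ^ (1 - p) * (c ^ (2 * (1 - p)) * j ^ p)) := by
  have h2 : (0:ℝ) < D ^ 2 := by positivity
  have e : c ^ 2 / 2 = (1 / 2) * c ^ 2 := by ring
  rw [Real.mul_rpow h2.le (by positivity), Real.mul_rpow h2.le hj, e,
    Real.mul_rpow (by norm_num) (by positivity), Real.rpow_mul hc, Real.rpow_two]
  have : (D ^ 2) ^ (1 - p) * (D ^ 2) ^ p = D ^ 2 := by
    rw [← Real.rpow_add h2]; simp
  calc _ = ((D ^ 2) ^ (1 - p) * (D ^ 2) ^ p) * ((1 / 2 : ℝ) ^ (1 - p) * ((c ^ 2) ^ (1 - p) * j ^ p)) := by ring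
    _ = _ := by rw [this]

lemma aux_int (k0 k1 k2 s r : ℝ) : ∫ u in s..r, (k0 + k1 * u + k2 * u ^ 2)
    = k0 * (r - s) + k1 * (r ^ 2 - s ^ 2) / 2 + k2 * (r ^ 3 - s ^ 3) / 3 := by
  have := integral_eq_sub_of_hasDerivAt (a := s) (b := r)
    (f := fun u : ℝ => k0 * u + k1 * u ^ 2 / 2 + k2 * u ^ 3 / 3)
    (f' := fun u => k0 + k1 * u + k2 * u ^ 2) (fun u _ => by
      have h1 := (hasDerivAt_id' u).const_mul k0
      have h2 := (((hasDerivAt_id' u).pow 2).const_mul k1).div_const 2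
      have h3 := (((hasDerivAt_id' u).pow 3).const_mul k2).div_const 3
      refine ((h1.add h2).add h3).congr_deriv ?_
      simp; ring) (Continuous.intervalIntegrable (by fun_prop) _ _)
  rw [this]; ring

/-- Theorem 2.3: Ostrowski-type inequality via the power-mean inequality for `|f'|^q`
`m`-convex on `[0,∞)`, `q ∈ [1,∞)`. -/
theorem stmt_11 (f : ℝ → ℝ) (I : Set ℝ) (hIopen : IsOpen I) (hIconn : I.OrdConnected)
    (hIci : Set.Ici (0:ℝ) ⊆ I) (hf : ∀ y ∈ I, DifferentiableAt ℝ f y)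
    (a b : ℝ) (ha : 0 ≤ a) (hab : a < b)
    (hint : IntervalIntegrable (deriv f) volume a b)
    (q : ℝ) (hq : 1 ≤ q)
    (m : ℝ) (hm0 : 0 < m) (hm1 : m ≤ 1)
    (hmc : ∀ u ∈ Set.Ici (0:ℝ), ∀ v ∈ Set.Ici (0:ℝ), ∀ t ∈ Set.Icc (0:ℝ) 1,
      |deriv f (t * u + m * (1 - t) * v)| ^ q ≤
        t * |deriv f u| ^ q + m * (1 - t) * |deriv f v| ^ q)
    (x : ℝ) (hx : x ∈ Set.Icc a b) :
    |f x - (1 / (b - a)) * ∫ u in a..b, f u| ≤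
      (b - a) * (1 / 2 : ℝ) ^ (1 - 1 / q) *
        (((b - x) / (b - a)) ^ (2 * (1 - 1 / q)) *
            ((1 / 3) * ((b - x) / (b - a)) ^ 3 * |deriv f a| ^ q
              + m * ((b - x) ^ 2 * (b - 3 * a + 2 * x)) / (6 * (b - a) ^ 3) *
                  |deriv f (b / m)| ^ q) ^ (1 / q)
          + ((x - a) / (b - a)) ^ (2 * (1 - 1 / q)) *
            ((1 / 6 + ((b - x) ^ 2 * (3 * a - b - 2 * x)) / (6 * (b - a) ^ 3)) *
                  |deriv f a| ^ q
              + m * (1 / 3) * ((x - a) / (b - a)) ^ 3 *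
                  |deriv f (b / m)| ^ q) ^ (1 / q)) := by
  obtain ⟨hx1, hx2⟩ := hx
  have hD : 0 < b - a := by linarith
  have hder : ∀ u, 0 ≤ u → HasDerivAt f (deriv f u) u := fun u hu =>
    (hf u (hIci hu)).hasDerivAt
  have hcont : ContinuousOn f (Icc a b) := fun u hu =>
    (hder u (ha.trans hu.1)).continuousAt.continuousWithinAt
  have hi1 : IntervalIntegrable (deriv f) volume a x :=
    hint.mono_set (by rw [uIcc_of_le hx1, uIcc_of_le hab.le]; exact Icc_subset_Icc_right hx2)
  have hi2 : IntervalIntegrable (deriv f) volume x b :=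
    hint.mono_set (by rw [uIcc_of_le hx2, uIcc_of_le hab.le]; exact Icc_subset_Icc_left hx1)
  have hf1 : IntervalIntegrable f volume a x :=
    (hcont.mono (by rw [uIcc_of_le hx1]; exact Icc_subset_Icc_right hx2)).intervalIntegrable
  have hf2 : IntervalIntegrable f volume x b :=
    (hcont.mono (by rw [uIcc_of_le hx2]; exact Icc_subset_Icc_left hx1)).intervalIntegrable
  have ibp1 : ∫ u in a..x, (u - a) * deriv f u = (x - a) * f x - ∫ u in a..x, f u := by
    have := integral_mul_deriv_eq_deriv_mul (a := a) (b := x) (u := fun u => u - a)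
      (u' := fun _ => 1) (v := f) (v' := deriv f)
      (fun u _ => (hasDerivAt_id' u).sub_const a)
      (fun u hu => hder u (by rw [uIcc_of_le hx1] at hu; linarith [hu.1]))
      (by simp) hi1
    simpa using this
  have ibp2 : ∫ u in x..b, (b - u) * deriv f u = -((b - x) * f x) + ∫ u in x..b, f u := by
    have := integral_mul_deriv_eq_deriv_mul (a := x) (b := b) (u := fun u => b - u)
      (u' := fun _ => -1) (v := f) (v' := deriv f)
      (fun u _ => (hasDerivAt_id' u).const_sub b)
      (fun u hu => hder u (by rw [uIcc_of_le hx2] at hu; linarith [hu.1]))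
      (by simp) hi2
    simpa using this
  have hid : f x - (1 / (b - a)) * ∫ u in a..b, f u =
      (1 / (b - a)) * ((∫ u in a..x, (u - a) * deriv f u) - ∫ u in x..b, (b - u) * deriv f u) := by
    rw [ibp1, ibp2, ← integral_add_adjacent_intervals hf1 hf2]
    field_simp
    ring
  set A := |deriv f a| ^ q with hA
  set C := |deriv f (b / m)| ^ q with hC
  have hA0 : 0 ≤ A := by positivity
  have hC0 : 0 ≤ C := by positivity
  have hgB : ∀ u ∈ Icc a b, |deriv f u| ^ q ≤
      (b - u) / (b - a) * A + m * ((u - a) / (b - a)) * C := by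
    intro u hu
    have h1 : 0 ≤ (b - u) / (b - a) := div_nonneg (by linarith [hu.2]) hD.le
    have h2 : (b - u) / (b - a) ≤ 1 := by rw [div_le_one hD]; linarith [hu.1]
    have e : 1 - (b - u) / (b - a) = (u - a) / (b - a) := by field_simp; ring
    have := hmc a ha (b / m) (div_nonneg (by linarith) hm0.le) _ ⟨h1, h2⟩
    rw [e] at this
    convert this using 4
    field_simp
    ring
  have hc0 : 0 ≤ (b - x) / (b - a) := div_nonneg (by linarith) hD.le
  have hd0 : 0 ≤ (x - a) / (b - a) := div_nonneg (by linarith) hD.le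
  have hBc : Continuous fun u : ℝ => (b - u) / (b - a) * A + m * ((u - a) / (b - a)) * C := by
    fun_prop
  set j2 := (1 / 3) * ((b - x) / (b - a)) ^ 3 * A
              + m * ((b - x) ^ 2 * (b - 3 * a + 2 * x)) / (6 * (b - a) ^ 3) * C with hj2
  set j1 := (1 / 6 + ((b - x) ^ 2 * (3 * a - b - 2 * x)) / (6 * (b - a) ^ 3)) * A
              + m * (1 / 3) * ((x - a) / (b - a)) ^ 3 * C with hj1
  have hj2n : 0 ≤ j2 := by
    have h1 : 0 ≤ b - 3 * a + 2 * x := by linarith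
    positivity
  have hj1n : 0 ≤ j1 := by
    have e : 1 / 6 + ((b - x) ^ 2 * (3 * a - b - 2 * x)) / (6 * (b - a) ^ 3)
        = (x - a) ^ 2 * (b - a + 2 * (b - x)) / (6 * (b - a) ^ 3) := by field_simp; ring
    rw [hj1, e]
    have h1 : 0 ≤ b - a + 2 * (b - x) := by linarith
    positivity
  have b1 := aux_pm a x hx1 (fun u => u - a) _ (deriv f) (by fun_prop) hBc hi1 q hq
    (fun u hu => by linarith [hu.1]) (fun u hu => hgB u ⟨hu.1, hu.2.trans hx2⟩)
    ((b - a) ^ 2 * (((x - a) / (b - a)) ^ 2 / 2)) ((b - a) ^ 2 * j1)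
    (by
      have := aux_int (-a) 1 0 a x
      rw [integral_congr (g := fun u => -a + 1 * u + 0 * u ^ 2) (fun u _ => by simp; ring), this]
      field_simp; ring)
    (by
      have := aux_int (-a * (b * A - m * a * C) / (b - a))
        (((b * A - m * a * C) - a * (m * C - A)) / (b - a)) ((m * C - A) / (b - a)) a x
      rw [integral_congr (g := fun u => -a * (b * A - m * a * C) / (b - a) +
        ((b * A - m * a * C) - a * (m * C - A)) / (b - a) * u + (m * C - A) / (b - a) * u ^ 2)
        (fun u _ => by simp only []; field_simp; ring), this, hj1]
      field_simp; ring)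
    (fun h => by have : 0 < x - a := by linarith
                 positivity)
  have b2 := aux_pm x b hx2 (fun u => b - u) _ (deriv f) (by fun_prop) hBc hi2 q hq
    (fun u hu => by linarith [hu.2]) (fun u hu => hgB u ⟨hx1.trans hu.1, hu.2⟩)
    ((b - a) ^ 2 * (((b - x) / (b - a)) ^ 2 / 2)) ((b - a) ^ 2 * j2)
    (by
      have := aux_int b (-1) 0 x b
      rw [integral_congr (g := fun u => b + (-1) * u + 0 * u ^ 2) (fun u _ => by simp; ring), this]
      field_simp; ring)
    (by
      have := aux_int (b * (b * A - m * a * C) / (b - a))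
        ((-(b * A - m * a * C) + b * (m * C - A)) / (b - a)) (-(m * C - A) / (b - a)) x b
      rw [integral_congr (g := fun u => b * (b * A - m * a * C) / (b - a) +
        (-(b * A - m * a * C) + b * (m * C - A)) / (b - a) * u + -(m * C - A) / (b - a) * u ^ 2)
        (fun u _ => by simp only []; field_simp; ring), this, hj2]
      field_simp; ring)
    (fun h => by have : 0 < b - x := by linarith
                 positivity)
  rw [aux_scale _ _ _ _ hD hd0 hj1n] at b1
  rw [aux_scale _ _ _ _ hD hc0 hj2n] at b2
  rw [hid, abs_mul, abs_of_pos (by positivity : 0 < 1 / (b - a))]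
  refine (mul_le_mul_of_nonneg_left ((abs_sub _ _).trans (add_le_add b1 b2))
    (by positivity)).trans (le_of_eq ?_)
  field_simp
  ring
end

section
/- Let f : ℝ → ℝ be differentiable on an open interval I containing [0,∞), let 0 ≤ a < b, suppose f' is integrable on [a,b], let q ∈ [1,∞), and suppose |f'|^q is m-convex on [0,∞) for some fixed m ∈ (0,1]. Then |f((a+b)/2) - (1/(b-a))·∫_a^b f(u) du| ≤ (b-a)·(3^{1-1/q}/8)·( |f'(a)| + m^{1/q}·|f'(b/m)| ). -/
open MeasureTheory Set intervalIntegral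

lemma aux_half (f : ℝ → ℝ) (a b c e : ℝ) (hab : a < b)
    (hd : ∀ x ∈ Set.Icc a b, DifferentiableAt ℝ f x)
    (hb : ∀ x ∈ Set.Icc a b, |deriv f x| ≤ c + e * (x - (a + b) / 2)) :
    (∫ u in a..b, f u) - (b - a) * f ((a + b) / 2) ≤ c * (b - a) ^ 2 / 4 := by
  set M := (a + b) / 2 with hM
  have haM : a < M := by rw [hM]; linarith
  have hMb : M < b := by rw [hM]; linarith
  have hG : ∀ x, HasDerivAt (fun x => c * (x - M) + e * (x - M) ^ 2 / 2) (c + e * (x - M)) x := by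
    intro x
    have h1 : HasDerivAt (fun x : ℝ => x - M) 1 x := (hasDerivAt_id x).sub_const M
    have := (h1.const_mul c).add (((h1.pow 2).const_mul e).div_const 2)
    refine this.congr_deriv ?_
    simp; ring
  have m1 : MonotoneOn (fun x => (c * (x - M) + e * (x - M) ^ 2 / 2) - f x) (Set.Icc a b) := by
    have hD : ∀ x ∈ Set.Icc a b, HasDerivAt
        (fun x => (c * (x - M) + e * (x - M) ^ 2 / 2) - f x) (c + e * (x - M) - deriv f x) x :=
      fun x hx => (hG x).sub (hd x hx).hasDerivAt
    refine monotoneOn_of_hasDerivWithinAt_nonneg (convex_Icc a b)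
      (fun x hx => (hD x hx).continuousAt.continuousWithinAt)
      (fun x hx => (hD x (interior_subset hx)).hasDerivWithinAt) ?_
    intro x hx
    have := (abs_le.1 (hb x (interior_subset hx))).2
    linarith
  have m2 : MonotoneOn (fun x => (c * (x - M) + e * (x - M) ^ 2 / 2) + f x) (Set.Icc a b) := by
    have hD : ∀ x ∈ Set.Icc a b, HasDerivAt
        (fun x => (c * (x - M) + e * (x - M) ^ 2 / 2) + f x) (c + e * (x - M) + deriv f x) x :=
      fun x hx => (hG x).add (hd x hx).hasDerivAt
    refine monotoneOn_of_hasDerivWithinAt_nonneg (convex_Icc a b)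
      (fun x hx => (hD x hx).continuousAt.continuousWithinAt)
      (fun x hx => (hD x (interior_subset hx)).hasDerivWithinAt) ?_
    intro x hx
    have := (abs_le.1 (hb x (interior_subset hx))).1
    linarith
  have hc : ContinuousOn f (Set.Icc a b) := fun x hx => (hd x hx).continuousAt.continuousWithinAt
  have i1 : IntervalIntegrable f volume a M :=
    (hc.mono (Set.Icc_subset_Icc_right hMb.le)).intervalIntegrable_of_Icc haM.le
  have i2 : IntervalIntegrable f volume M b :=
    (hc.mono (Set.Icc_subset_Icc_left haM.le)).intervalIntegrable_of_Icc hMb.le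
  have hMm : M ∈ Set.Icc a b := ⟨haM.le, hMb.le⟩
  have P : ∀ x, HasDerivAt (fun x => f M * x + (c * (x - M) ^ 2 / 2 + e * (x - M) ^ 3 / 6))
      (f M + (c * (x - M) + e * (x - M) ^ 2 / 2)) x := by
    intro x
    have h1 : HasDerivAt (fun x : ℝ => x - M) 1 x := (hasDerivAt_id x).sub_const M
    have := ((hasDerivAt_id x).const_mul (f M)).add
      ((((h1.pow 2).const_mul c).div_const 2).add (((h1.pow 3).const_mul e).div_const 6))
    refine this.congr_deriv ?_
    simp; ring
  have N : ∀ x, HasDerivAt (fun x => f M * x - (c * (x - M) ^ 2 / 2 + e * (x - M) ^ 3 / 6))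
      (f M - (c * (x - M) + e * (x - M) ^ 2 / 2)) x := by
    intro x
    have h1 : HasDerivAt (fun x : ℝ => x - M) 1 x := (hasDerivAt_id x).sub_const M
    have := ((hasDerivAt_id x).const_mul (f M)).sub
      ((((h1.pow 2).const_mul c).div_const 2).add (((h1.pow 3).const_mul e).div_const 6))
    refine this.congr_deriv ?_
    simp; ring
  have j2 : ∫ u in M..b, f u ≤ ∫ u in M..b, (f M + (c * (u - M) + e * (u - M) ^ 2 / 2)) := by
    refine intervalIntegral.integral_mono_on hMb.le i2
      (Continuous.intervalIntegrable (by fun_prop) _ _) ?_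
    intro x hx
    have := m1 hMm ⟨haM.le.trans hx.1, hx.2⟩ hx.1
    simp at this
    linarith
  have j1 : ∫ u in a..M, f u ≤ ∫ u in a..M, (f M - (c * (u - M) + e * (u - M) ^ 2 / 2)) := by
    refine intervalIntegral.integral_mono_on haM.le i1
      (Continuous.intervalIntegrable (by fun_prop) _ _) ?_
    intro x hx
    have := m2 ⟨hx.1, hx.2.trans hMb.le⟩ hMm hx.2
    simp at this
    linarith
  rw [intervalIntegral.integral_eq_sub_of_hasDerivAt (fun x _ => P x)
    (Continuous.intervalIntegrable (by fun_prop) _ _)] at j2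
  rw [intervalIntegral.integral_eq_sub_of_hasDerivAt (fun x _ => N x)
    (Continuous.intervalIntegrable (by fun_prop) _ _)] at j1
  rw [← intervalIntegral.integral_add_adjacent_intervals i1 i2]
  have e1 : a = M - (b - a) / 2 := by rw [hM]; ring
  have e2 : b = M + (b - a) / 2 := by rw [hM]; ring
  generalize f M = y at *
  have k1 : a - M = -((b - a) / 2) := by linarith
  have k2 : b - M = (b - a) / 2 := by linarith
  rw [k2] at j2
  rw [k1] at j1
  simp only [sub_self] at j1 j2
  have k3 : (b - a) * y = (y * b - y * M) + (y * M - y * a) := by ring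
  linarith

lemma aux_pow (r t : ℝ) (hr0 : 0 ≤ r) (hr1 : r ≤ 1) (ht : 0 ≤ t) :
    t ^ r ≤ (1 / 2 : ℝ) ^ r * (1 + r * (2 * t - 1)) := by
  have h := rpow_one_add_le_one_add_mul_self (s := 2 * t - 1) (by linarith) hr0 hr1
  have : t ^ r = (1 / 2 : ℝ) ^ r * (1 + (2 * t - 1)) ^ r := by
    rw [← Real.mul_rpow (by norm_num) (by linarith)]
    congr 1; ring
  rw [this]
  exact mul_le_mul_of_nonneg_left h (by positivity)

/-- Remark 2.5: midpoint inequality for `|f'|^q` `m`-convex on `[0,∞)`, `q ∈ [1,∞)`. -/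
theorem stmt_12 (f : ℝ → ℝ) (I : Set ℝ) (hIopen : IsOpen I) (hIconn : I.OrdConnected)
    (hIci : Set.Ici (0:ℝ) ⊆ I) (hf : ∀ y ∈ I, DifferentiableAt ℝ f y)
    (a b : ℝ) (ha : 0 ≤ a) (hab : a < b)
    (hint : IntervalIntegrable (deriv f) volume a b)
    (q : ℝ) (hq : 1 ≤ q)
    (m : ℝ) (hm0 : 0 < m) (hm1 : m ≤ 1)
    (hmc : ∀ u ∈ Set.Ici (0:ℝ), ∀ v ∈ Set.Ici (0:ℝ), ∀ t ∈ Set.Icc (0:ℝ) 1,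
      |deriv f (t * u + m * (1 - t) * v)| ^ q ≤
        t * |deriv f u| ^ q + m * (1 - t) * |deriv f v| ^ q) :
    |f ((a + b) / 2) - (1 / (b - a)) * ∫ u in a..b, f u| ≤
      (b - a) * ((3 : ℝ) ^ (1 - 1 / q) / 8) *
        (|deriv f a| + m ^ (1 / q) * |deriv f (b / m)|) := by
  have hq0 : 0 < q := by linarith
  set r := 1 / q with hr
  have hr0 : 0 ≤ r := by positivity
  have hr1 : r ≤ 1 := by rw [hr, div_le_one hq0]; exact hq
  have hqr : q * r = 1 := by rw [hr]; field_simp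
  set A := |deriv f a| with hA
  set B := |deriv f (b / m)| with hB
  have hA0 : 0 ≤ A := abs_nonneg _
  have hB0 : 0 ≤ B := abs_nonneg _
  have hba : 0 < b - a := by linarith
  have hbound : ∀ x ∈ Set.Icc a b, |deriv f x| ≤
      (1 / 2 : ℝ) ^ r * (A + m ^ r * B) +
        ((1 / 2 : ℝ) ^ r * r * 2 * (m ^ r * B - A) / (b - a)) * (x - (a + b) / 2) := by
    intro x hx
    obtain ⟨t, ht⟩ : ∃ t, t = (b - x) / (b - a) := ⟨_, rfl⟩
    have ht0 : 0 ≤ t := by rw [ht]; exact div_nonneg (by linarith [hx.2]) hba.le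
    have ht1 : t ≤ 1 := by rw [ht, div_le_one hba]; linarith [hx.1]
    have hxt : x = b - t * (b - a) := by rw [ht]; field_simp; ring
    have h := hmc a ha (b / m) (div_nonneg (by linarith) hm0.le) t ⟨ht0, ht1⟩
    have hx' : t * a + m * (1 - t) * (b / m) = x := by rw [hxt]; field_simp; ring
    rw [hx'] at h
    have h2 := Real.rpow_le_rpow (by positivity) h hr0
    rw [← Real.rpow_mul (abs_nonneg _), hqr, Real.rpow_one] at h2
    have h1t : 0 ≤ 1 - t := by linarith
    have h3 := Real.rpow_add_le_add_rpow (p := r) (a := t * A ^ q) (b := m * (1 - t) * B ^ q)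
      (by positivity) (by positivity) hr0 hr1
    rw [Real.mul_rpow ht0 (by positivity), Real.mul_rpow (by positivity) (by positivity),
      Real.mul_rpow hm0.le h1t, ← Real.rpow_mul hA0, ← Real.rpow_mul hB0, hqr, Real.rpow_one,
      Real.rpow_one] at h3
    have p1 := mul_le_mul_of_nonneg_right (aux_pow r t hr0 hr1 ht0) hA0
    have p2 := mul_le_mul_of_nonneg_right (aux_pow r (1 - t) hr0 hr1 h1t)
      (by positivity : 0 ≤ m ^ r * B)
    have e : (1 / 2 : ℝ) ^ r * (A + m ^ r * B) +
        ((1 / 2 : ℝ) ^ r * r * 2 * (m ^ r * B - A) / (b - a)) * (x - (a + b) / 2) =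
        (1 / 2 : ℝ) ^ r * (1 + r * (2 * t - 1)) * A +
        (1 / 2 : ℝ) ^ r * (1 + r * (2 * (1 - t) - 1)) * (m ^ r * B) := by
      generalize (1 / 2 : ℝ) ^ r = z
      rw [hxt]; field_simp; ring
    rw [e]
    linarith
  have hd : ∀ x ∈ Set.Icc a b, DifferentiableAt ℝ f x :=
    fun x hx => hf x (hIci (ha.trans hx.1))
  have u1 := aux_half f a b _ _ hab hd hbound
  have u2 := aux_half (fun x => - f x) a b _ _ hab (fun x hx => (hd x hx).neg)
    (fun x hx => by rw [deriv.fun_neg, abs_neg]; exact hbound x hx)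
  rw [intervalIntegral.integral_neg] at u2
  set J := ∫ u in a..b, f u
  set S := A + m ^ r * B with hS
  have hS0 : 0 ≤ S := by positivity
  have hz : (1 / 2 : ℝ) ^ r * 2 ≤ 3 ^ (1 - r) := by
    have : (1 / 2 : ℝ) ^ r * 2 = 2 ^ (1 - r) := by
      rw [Real.rpow_sub (by norm_num), Real.rpow_one, Real.div_rpow (by norm_num) (by norm_num),
        Real.one_rpow]
      ring
    rw [this]
    exact Real.rpow_le_rpow (by norm_num) (by norm_num) (by linarith)
  have hK : (1 / 2 : ℝ) ^ r * S * (b - a) ^ 2 / 4 ≤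
      ((b - a) * ((3 : ℝ) ^ (1 - r) / 8) * S) * (b - a) := by
    have := mul_le_mul_of_nonneg_right hz (by positivity : 0 ≤ S * (b - a) ^ 2 / 8)
    linarith
  have hdiv : f ((a + b) / 2) - 1 / (b - a) * J = ((b - a) * f ((a + b) / 2) - J) / (b - a) := by
    field_simp
  rw [hdiv, abs_div, abs_of_pos hba, div_le_iff₀ hba]
  refine le_trans ?_ hK
  rw [abs_le]
  constructor <;> linarith
end

section
/- Let 0 ≤ a < b, let n ≥ 2 be an integer, and let m ∈ (0,1]. Assume that the function x ↦ n·x^{n-1} is m-convex on [0,∞). Then |((a+b)/2)^n - (b^{n+1} - a^{n+1})/((n+1)·(b-a))| ≤ n·((b-a)/8)·min{ a^{n-1} + m·(b/m)^{n-1} , b^{n-1} + m·(a/m)^{n-1} }. -/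
open Set

theorem tang_aux (n : ℕ) (x y : ℝ) (hx : 0 ≤ x) (hy : 0 ≤ y) :
    y ^ (n + 1) + ((n : ℝ) + 1) * y ^ n * (x - y) ≤ x ^ (n + 1) := by
  induction n with
  | zero => simp
  | succ k ih =>
    have h1 := mul_le_mul_of_nonneg_right ih hx
    have h2 : 0 ≤ ((k : ℝ) + 1) * y ^ k * (x - y) ^ 2 := by positivity
    push_cast
    have e : x ^ (k + 1 + 1) = x ^ (k + 1) * x := by ring
    rw [e]
    refine le_trans ?_ h1
    rw [← sub_nonneg]
    refine le_of_le_of_eq h2 ?_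
    ring

theorem mono_aux (G G' : ℝ → ℝ) (h : ℝ) (hh : 0 ≤ h) (h0 : G 0 = 0)
    (hd : ∀ x, HasDerivAt G (G' x) x) (hp : ∀ x, 0 ≤ x → x ≤ h → 0 ≤ G' x) : 0 ≤ G h := by
  have : MonotoneOn G (Set.Icc 0 h) := by
    apply monotoneOn_of_deriv_nonneg (convex_Icc 0 h)
    · exact fun x _ => (hd x).continuousAt.continuousWithinAt
    · exact fun x _ => (hd x).differentiableAt.differentiableWithinAt
    · intro x hx
      rw [interior_Icc] at hx
      rw [(hd x).deriv]
      exact hp x hx.1.le hx.2.le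
  have h2 := this (Set.left_mem_Icc.2 hh) (Set.right_mem_Icc.2 hh) hh
  rwa [h0] at h2

theorem dp_aux (c : ℝ) (k : ℕ) (x : ℝ) :
    HasDerivAt (fun h : ℝ => (c + h) ^ (k + 1)) (((k : ℝ) + 1) * (c + x) ^ k) x := by
  simpa using ((hasDerivAt_id x).const_add c).fun_pow (k + 1)

theorem dm_aux (c : ℝ) (k : ℕ) (x : ℝ) :
    HasDerivAt (fun h : ℝ => (c - h) ^ (k + 1)) (-(((k : ℝ) + 1) * (c - x) ^ k)) x := by
  simpa using ((hasDerivAt_id x).const_sub c).fun_pow (k + 1)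

theorem lower_aux (k : ℕ) (c h : ℝ) (hh : 0 ≤ h) (hc : h ≤ c) :
    0 ≤ (c + h) ^ (k + 2) - (c - h) ^ (k + 2) - 2 * ((k : ℝ) + 2) * c ^ (k + 1) * h := by
  refine mono_aux (fun h => (c + h) ^ (k + 2) - (c - h) ^ (k + 2)
      - 2 * ((k : ℝ) + 2) * c ^ (k + 1) * h)
    (fun h => ((k : ℝ) + 2) * ((c + h) ^ (k + 1) + (c - h) ^ (k + 1) - 2 * c ^ (k + 1)))
    h hh (by simp) ?_ ?_
  · intro x
    have := ((dp_aux c (k + 1) x).sub (dm_aux c (k + 1) x)).sub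
      ((hasDerivAt_id x).const_mul (2 * ((k : ℝ) + 2) * c ^ (k + 1)))
    refine HasDerivAt.congr_deriv this ?_
    push_cast
    ring
  · intro x hx hxh
    have h1 := tang_aux k (c + x) c (by linarith) (by linarith)
    have h2 := tang_aux k (c - x) c (by linarith) (by linarith)
    have : 0 ≤ (c + x) ^ (k + 1) + (c - x) ^ (k + 1) - 2 * c ^ (k + 1) := by linarith
    positivity

theorem upper_aux (k : ℕ) (c h : ℝ) (hh : 0 ≤ h) (hc : h ≤ c) :
    0 ≤ 2 * ((k : ℝ) + 3) * c ^ (k + 2) * h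
      + ((k : ℝ) + 3) * ((k : ℝ) + 2) / 2 * (h ^ 2 * ((c + h) ^ (k + 1) + (c - h) ^ (k + 1)))
      - ((c + h) ^ (k + 3) - (c - h) ^ (k + 3)) := by
  refine mono_aux (fun h => 2 * ((k : ℝ) + 3) * c ^ (k + 2) * h
      + ((k : ℝ) + 3) * ((k : ℝ) + 2) / 2 * (h ^ 2 * ((c + h) ^ (k + 1) + (c - h) ^ (k + 1)))
      - ((c + h) ^ (k + 3) - (c - h) ^ (k + 3)))
    (fun h => ((k : ℝ) + 3) * (2 * c ^ (k + 2)
      + ((k : ℝ) + 2) * h * ((c + h) ^ (k + 1) + (c - h) ^ (k + 1))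
      - ((c + h) ^ (k + 2) + (c - h) ^ (k + 2)))
      + ((k : ℝ) + 3) * ((k : ℝ) + 2) / 2 * h ^ 2 * (((k : ℝ) + 1) * ((c + h) ^ k - (c - h) ^ k)))
    h hh (by simp) ?_ ?_
  · intro x
    have := (((hasDerivAt_id x).const_mul (2 * ((k : ℝ) + 3) * c ^ (k + 2))).add
      ((((hasDerivAt_id x).pow 2).mul ((dp_aux c k x).add (dm_aux c k x))).const_mul
        (((k : ℝ) + 3) * ((k : ℝ) + 2) / 2))).sub
      ((dp_aux c (k + 2) x).sub (dm_aux c (k + 2) x))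
    refine HasDerivAt.congr_deriv this ?_
    simp
    ring
  · intro x hx hxh
    have hcx : 0 ≤ c - x := by linarith
    have h1 := tang_aux (k + 1) c (c + x) (by linarith) (by linarith)
    push_cast at h1
    have h2 : (c - x) ^ (k + 2) ≤ c ^ (k + 2) := by gcongr; linarith
    have h3 : 0 ≤ (c + x) ^ k - (c - x) ^ k := by
      rw [sub_nonneg]; gcongr; linarith
    have h4 : 0 ≤ ((k : ℝ) + 2) * x * (c - x) ^ (k + 1) := by positivity
    have h5 : 0 ≤ 2 * c ^ (k + 2)
      + ((k : ℝ) + 2) * x * ((c + x) ^ (k + 1) + (c - x) ^ (k + 1))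
      - ((c + x) ^ (k + 2) + (c - x) ^ (k + 2)) := by
      have e : (k + 1 + 1) = k + 2 := rfl
      rw [e] at h1
      linarith
    positivity

theorem mdiv_aux (k : ℕ) (m x : ℝ) (hm0 : 0 < m) (hm1 : m ≤ 1) (hx : 0 ≤ x) :
    x ^ (k + 1) ≤ m * (x / m) ^ (k + 1) := by
  have e : m * (x / m) ^ (k + 1) = x * (x / m) ^ k := by
    rw [pow_succ]; field_simp
  rw [e, pow_succ, mul_comm]
  have : x ≤ x / m := by rw [le_div_iff₀ hm0]; nlinarith
  gcongr

/-- Proposition 3.1: special-means inequality `|Aⁿ(a,b) - Lₙⁿ(a,b)| ≤ ...` for the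
`m`-convex function `x ↦ n x^{n-1}` (the derivative of `x ↦ xⁿ`). -/
theorem stmt_13 (a b : ℝ) (ha : 0 ≤ a) (hab : a < b)
    (n : ℕ) (hn : 2 ≤ n)
    (m : ℝ) (hm0 : 0 < m) (hm1 : m ≤ 1)
    (hmc : ∀ x ∈ Set.Ici (0:ℝ), ∀ y ∈ Set.Ici (0:ℝ), ∀ t ∈ Set.Icc (0:ℝ) 1,
      (n : ℝ) * (t * x + m * (1 - t) * y) ^ (n - 1) ≤
        t * ((n : ℝ) * x ^ (n - 1)) + m * (1 - t) * ((n : ℝ) * y ^ (n - 1))) :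
    |((a + b) / 2) ^ n - (b ^ (n + 1) - a ^ (n + 1)) / (((n : ℝ) + 1) * (b - a))| ≤
      (n : ℝ) * ((b - a) / 8) *
        min (a ^ (n - 1) + m * (b / m) ^ (n - 1))
          (b ^ (n - 1) + m * (a / m) ^ (n - 1)) := by
  obtain ⟨k, rfl⟩ : ∃ k, n = k + 2 := ⟨n - 2, by omega⟩
  have e1 : k + 2 - 1 = k + 1 := rfl
  rw [e1]
  have hb : 0 ≤ b := by linarith
  have hmin : a ^ (k + 1) + b ^ (k + 1) ≤ min (a ^ (k + 1) + m * (b / m) ^ (k + 1))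
          (b ^ (k + 1) + m * (a / m) ^ (k + 1)) := by
    have h1 := mdiv_aux k m a hm0 hm1 ha
    have h2 := mdiv_aux k m b hm0 hm1 hb
    exact le_min (by linarith) (by linarith)
  have hba : 0 < b - a := by linarith
  refine le_trans ?_ (mul_le_mul_of_nonneg_left hmin (by positivity))
  have hl := lower_aux (k + 1) ((a + b) / 2) ((b - a) / 2) (by linarith) (by linarith)
  have hu := upper_aux k ((a + b) / 2) ((b - a) / 2) (by linarith) (by linarith)
  have ep : (a + b) / 2 + (b - a) / 2 = b := by ring
  have em : (a + b) / 2 - (b - a) / 2 = a := by ring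
  rw [ep, em] at hl hu
  push_cast at *
  have hD : 0 < ((k : ℝ) + 2 + 1) * (b - a) := by positivity
  have e2 : k + 2 + 1 = k + 3 := rfl
  have e3 : k + 1 + 2 = k + 3 := rfl
  have e4 : k + 1 + 1 = k + 2 := rfl
  rw [e2]
  rw [e3, e4] at hl
  rw [abs_sub_comm, abs_of_nonneg]
  · rw [sub_le_iff_le_add, div_le_iff₀ hD]
    linarith
  · rw [sub_nonneg, le_div_iff₀ hD]
    linarith
end

section
/- Let f : ℝ → ℝ be differentiable on an open interval I containing [0,∞), let 0 ≤ a < b, suppose f' is integrable on [a,b], let q ∈ [1,∞), and suppose |f'|^q is convex on [a,b]. Let a = x₀ < x₁ < ... < x_{n-1} < x_n = b be a division of [a,b] and let M(f,d) = Σ_{i=0}^{n-1} (x_{i+1} - x_i)·f((x_i + x_{i+1})/2) be the composite midpoint rule. Then |∫_a^b f(x) dx - M(f,d)| ≤ (3^{1-1/q}/8)·Σ_{i=0}^{n-1} (x_{i+1} - x_i)²·( |f'(x_i)| + |f'(x_{i+1})| ). -/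
open MeasureTheory Set intervalIntegral

lemma aux_pow_s16 (p t : ℝ) (hp0 : 0 < p) (hp1 : p ≤ 1) (ht0 : 0 ≤ t) (ht1 : t ≤ 1) :
    (1 - t) ^ p + t ^ p ≤ (3 : ℝ) ^ (1 - p) := by
  have h0 := (Real.concaveOn_rpow hp0.le hp1).2 (show 1 - t ∈ Ici (0:ℝ) from by
    simp only [Set.mem_Ici]; linarith) (show t ∈ Ici (0:ℝ) from ht0)
  have h := h0 (show (0:ℝ) ≤ 1/2 by norm_num) (show (0:ℝ) ≤ 1/2 by norm_num) (by norm_num)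
  simp only [smul_eq_mul] at h
  have e : (1/2 : ℝ) * (1 - t) + 1/2 * t = 2⁻¹ := by ring
  rw [e, Real.inv_rpow (by norm_num)] at h
  have h2 : (2:ℝ) ^ (1 - p) = 2 * (2 ^ p)⁻¹ := by
    rw [Real.rpow_sub (by norm_num), Real.rpow_one]; rfl
  have h3 : (2:ℝ) ^ (1 - p) ≤ 3 ^ (1 - p) :=
    Real.rpow_le_rpow (by norm_num) (by norm_num) (by linarith)
  linarith

lemma aux_pt (g A B q t : ℝ) (hg : 0 ≤ g) (hA : 0 ≤ A) (hB : 0 ≤ B) (hq : 1 ≤ q)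
    (ht0 : 0 ≤ t) (ht1 : t ≤ 1) (h : g ^ q ≤ (1 - t) * A ^ q + t * B ^ q) :
    g ≤ (1 - t) ^ (1 / q) * A + t ^ (1 / q) * B := by
  have hq0 : 0 < q := by linarith
  have hp0 : 0 < 1 / q := by positivity
  have hp1 : 1 / q ≤ 1 := by rw [div_le_one hq0]; exact hq
  have h1t : 0 ≤ 1 - t := by linarith
  have e : ∀ y : ℝ, 0 ≤ y → (y ^ q) ^ (1 / q) = y := fun y hy => by
    rw [← Real.rpow_mul hy, mul_one_div_cancel hq0.ne', Real.rpow_one]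
  have hAq : 0 ≤ A ^ q := by positivity
  have hBq : 0 ≤ B ^ q := by positivity
  calc g = (g ^ q) ^ (1 / q) := (e g hg).symm
    _ ≤ ((1 - t) * A ^ q + t * B ^ q) ^ (1 / q) :=
        Real.rpow_le_rpow (by positivity) h hp0.le
    _ ≤ ((1 - t) * A ^ q) ^ (1 / q) + (t * B ^ q) ^ (1 / q) :=
        Real.rpow_add_le_add_rpow (by positivity) (by positivity) hp0.le hp1
    _ = _ := by
        rw [Real.mul_rpow h1t hAq, Real.mul_rpow ht0 hBq, e A hA, e B hB]

lemma aux_pair (F : ℝ → ℝ) (c d q s : ℝ) (hcd : c < d) (hq : 1 ≤ q)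
    (hconv : ConvexOn ℝ (Set.Icc c d) (fun u => |F u| ^ q)) (hs0 : 0 ≤ s)
    (hs1 : s ≤ (d - c) / 2) :
    |F ((c + d) / 2 + s)| + |F ((c + d) / 2 - s)| ≤
      (3 : ℝ) ^ (1 - 1 / q) * (|F c| + |F d|) := by
  have hq0 : 0 < q := by linarith
  have hd : 0 < d - c := by linarith
  obtain ⟨t, ht⟩ : ∃ t, t = 1 / 2 + s / (d - c) := ⟨_, rfl⟩
  have hts : t * (d - c) = (d - c) / 2 + s := by rw [ht]; field_simp
  have ht0 : 0 ≤ t := by rw [ht]; positivity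
  have ht1 : t ≤ 1 := by nlinarith
  have h0 := hconv.2 (left_mem_Icc.2 hcd.le) (right_mem_Icc.2 hcd.le)
  have h1 := h0 (show 0 ≤ 1 - t by linarith) ht0 (by ring)
  have h2 := h0 ht0 (show 0 ≤ 1 - t by linarith) (by ring)
  simp only [smul_eq_mul] at h1 h2
  rw [show (1 - t) * c + t * d = (c + d) / 2 + s by linarith] at h1
  rw [show t * c + (1 - t) * d = (c + d) / 2 - s by linarith] at h2
  have k1 := aux_pt _ _ _ q t (abs_nonneg _) (abs_nonneg _) (abs_nonneg _) hq ht0 ht1 h1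
  have k2 := aux_pt _ _ _ q t (abs_nonneg _) (abs_nonneg _) (abs_nonneg _) hq ht0 ht1
    (h2.trans (add_comm _ _).le)
  have k3 := aux_pow_s16 (1 / q) t (by positivity) (by rw [div_le_one hq0]; exact hq) ht0 ht1
  have k4 := mul_le_mul_of_nonneg_right k3 (add_nonneg (abs_nonneg (F c)) (abs_nonneg (F d)))
  linarith

lemma aux_one (f : ℝ → ℝ) (c d q : ℝ) (hcd : c < d) (hq : 1 ≤ q)
    (hf : ∀ y ∈ Set.Icc c d, DifferentiableAt ℝ f y)
    (hconv : ConvexOn ℝ (Set.Icc c d) (fun u => |deriv f u| ^ q)) :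
    |(∫ u in c..d, f u) - (d - c) * f ((c + d) / 2)| ≤
      ((3 : ℝ) ^ (1 - 1 / q) / 8) * ((d - c) ^ 2 * (|deriv f c| + |deriv f d|)) := by
  obtain ⟨m, hm⟩ : ∃ m, m = (c + d) / 2 := ⟨_, rfl⟩
  obtain ⟨r, hr⟩ : ∃ r, r = (d - c) / 2 := ⟨_, rfl⟩
  have hr0 : 0 < r := by rw [hr]; linarith
  obtain ⟨C, hC⟩ : ∃ C, C = (3 : ℝ) ^ (1 - 1 / q) * (|deriv f c| + |deriv f d|) := ⟨_, rfl⟩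
  obtain ⟨φ, hφ⟩ : ∃ φ : ℝ → ℝ, φ = fun s => f (m + s) + f (m - s) - 2 * f m := ⟨_, rfl⟩
  have hfc : ContinuousOn f (Icc c d) := fun y hy => (hf y hy).continuousAt.continuousWithinAt
  have hd : ∀ s ∈ Icc 0 r, HasDerivAt φ (deriv f (m + s) - deriv f (m - s)) s := by
    intro s hs
    have a1 := (hf (m + s) ⟨by linarith [hs.1, hs.2], by linarith [hs.1, hs.2]⟩).hasDerivAt
    have a2 := (hf (m - s) ⟨by linarith [hs.1, hs.2], by linarith [hs.1, hs.2]⟩).hasDerivAt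
    have b1 := a1.comp s ((hasDerivAt_id s).const_add m)
    have b2 := a2.comp s ((hasDerivAt_id s).const_sub m)
    have := (b1.add b2).sub_const (2 * f m)
    rw [hφ]
    exact HasDerivAt.congr_deriv this (by ring)
  have hbd : ∀ s ∈ Icc 0 r, |φ s| ≤ C * s := by
    intro s hs
    have := (convex_Icc 0 r).norm_image_sub_le_of_norm_hasDerivWithin_le (f := φ) (C := C)
      (fun y hy => (hd y hy).hasDerivWithinAt) (fun y hy => by
        rw [Real.norm_eq_abs]
        have := aux_pair (deriv f) c d q y hcd hq hconv hy.1 (by rw [← hr]; exact hy.2)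
        rw [← hm, ← hC] at this
        exact (abs_sub _ _).trans this) (left_mem_Icc.2 hr0.le) hs
    have e : φ 0 = 0 := by rw [hφ]; simp; ring
    rwa [e, sub_zero, sub_zero, Real.norm_eq_abs, Real.norm_eq_abs, abs_of_nonneg hs.1] at this
  have hi1 : IntervalIntegrable f volume c m :=
    (hfc.mono (Icc_subset_Icc le_rfl (by linarith))).intervalIntegrable_of_Icc (by linarith)
  have hi2 : IntervalIntegrable f volume m d :=
    (hfc.mono (Icc_subset_Icc (by linarith) le_rfl)).intervalIntegrable_of_Icc (by linarith)
  have hc1 : IntervalIntegrable (fun s => f (m + s)) volume 0 r := by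
    apply ContinuousOn.intervalIntegrable_of_Icc hr0.le
    exact hfc.comp (by fun_prop) (fun s hs => ⟨by linarith [hs.1, hs.2], by linarith [hs.1, hs.2]⟩)
  have hc2 : IntervalIntegrable (fun s => f (m - s)) volume 0 r := by
    apply ContinuousOn.intervalIntegrable_of_Icc hr0.le
    exact hfc.comp (by fun_prop) (fun s hs => ⟨by linarith [hs.1, hs.2], by linarith [hs.1, hs.2]⟩)
  have key : (∫ u in c..d, f u) - (d - c) * f m = ∫ s in (0:ℝ)..r, φ s := by
    rw [hφ, intervalIntegral.integral_sub (hc1.add hc2) (by simp),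
      intervalIntegral.integral_add hc1 hc2, intervalIntegral.integral_comp_add_left,
      intervalIntegral.integral_comp_sub_left, intervalIntegral.integral_const,
      ← intervalIntegral.integral_add_adjacent_intervals hi1 hi2, smul_eq_mul,
      show m - r = c by linarith, show m + r = d by linarith, hr]
    simp only [add_zero, sub_zero]
    ring
  rw [← hm, key]
  have := intervalIntegral.norm_integral_le_of_norm_le (μ := volume) (f := φ) (g := fun s => C * s)
    hr0.le (Filter.Eventually.of_forall fun s hs => hbd s ⟨hs.1.le, hs.2⟩)
    (Continuous.intervalIntegrable (by fun_prop) _ _)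
  rw [intervalIntegral.integral_const_mul, integral_id, Real.norm_eq_abs] at this
  refine this.trans (le_of_eq ?_)
  rw [hC, hr]; ring

/-- Proposition 4.2: error estimate for the composite midpoint rule, `|f'|^q` convex
(`1`-convex) on `[a,b]`, `q ∈ [1,∞)`. -/
theorem stmt_16 (f : ℝ → ℝ) (I : Set ℝ) (hIopen : IsOpen I) (hIconn : I.OrdConnected)
    (hIci : Set.Ici (0:ℝ) ⊆ I) (hf : ∀ y ∈ I, DifferentiableAt ℝ f y)
    (a b : ℝ) (ha : 0 ≤ a) (hab : a < b)
    (hint : IntervalIntegrable (deriv f) volume a b)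
    (q : ℝ) (hq : 1 ≤ q)
    (hconv : ConvexOn ℝ (Set.Icc a b) (fun u => |deriv f u| ^ q))
    (n : ℕ) (hn : 0 < n) (x : ℕ → ℝ) (hx0 : x 0 = a) (hxn : x n = b)
    (hxmono : ∀ i < n, x i < x (i + 1)) :
    |(∫ u in a..b, f u) -
        ∑ i ∈ Finset.range n, (x (i + 1) - x i) * f ((x i + x (i + 1)) / 2)| ≤
      ((3 : ℝ) ^ (1 - 1 / q) / 8) * ∑ i ∈ Finset.range n, (x (i + 1) - x i) ^ 2 *
        (|deriv f (x i)| + |deriv f (x (i + 1))|) := by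
  have hlow : ∀ i, i ≤ n → a ≤ x i := by
    intro i
    induction i with
    | zero => intro _; exact hx0.ge
    | succ k ih => intro h; exact (ih (by omega)).trans (hxmono k (by omega)).le
  have hup : ∀ j, j ≤ n → x (n - j) ≤ b := by
    intro j
    induction j with
    | zero => intro _; exact hxn.le
    | succ k ih =>
      intro h
      have h1 := hxmono (n - (k + 1)) (by omega)
      rw [show n - (k + 1) + 1 = n - k by omega] at h1
      exact h1.le.trans (ih (by omega))
  have hup' : ∀ i, i ≤ n → x i ≤ b := by
    intro i hi
    have := hup (n - i) (by omega)
    rwa [show n - (n - i) = i by omega] at this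
  have hdf : ∀ y, a ≤ y → DifferentiableAt ℝ f y := fun y hy => hf y (hIci (ha.trans hy))
  have hsum := intervalIntegral.sum_integral_adjacent_intervals (f := f) (μ := volume) (a := x)
    (n := n) (fun k hk => by
      apply ContinuousOn.intervalIntegrable_of_Icc (hxmono k hk).le
      exact fun y hy =>
        (hdf y ((hlow k hk.le).trans hy.1)).continuousAt.continuousWithinAt)
  rw [hx0, hxn] at hsum
  rw [← hsum, ← Finset.sum_sub_distrib, Finset.mul_sum]
  refine (Finset.abs_sum_le_sum_abs _ _).trans (Finset.sum_le_sum fun i hi => ?_)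
  have hi' : i < n := Finset.mem_range.1 hi
  exact aux_one f (x i) (x (i + 1)) q (hxmono i hi') hq
    (fun y hy => hdf y ((hlow i hi'.le).trans hy.1))
    (hconv.subset (Icc_subset_Icc (hlow i hi'.le) (hup' _ hi')) (convex_Icc _ _))
end
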